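/- arXiv:2308.13740 — 3 statements merged into one kernel-verified Lean document; each statement's English description precedes it below -/
import Mathlib

section
/- Let (X₁,…,Xₙ) be a centered Gaussian random vector in ℝⁿ with correlation coefficients ρ_{1i} between X₁ and X_i, and suppose each X_i has positive variance. Then for every α₁ ∈ (0,1), E[|X₁|^{-α₁} ∏_{i=2}^n X_i²] ≥ (∏_{i=2}^n (1-ρ_{1i}²)) · E[|X₁|^{-α₁}] · ∏_{i=2}^n E[X_i²]. -/
open MeasureTheory Matrix

namespace GPIAux
open ProbabilityTheory
section alg
variable {R : Type*} [CommRing R] [Algebra ℝ R] {J : Type*}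

/-- polynomials killed by any composition of `n` of the derivations -/
def Kill (D : J → Derivation ℝ R R) : ℕ → R → Prop
  | 0, q => q = 0
  | n + 1, q => ∀ j, Kill D n (D j q)

lemma kill_zero (D : J → Derivation ℝ R R) (n : ℕ) : Kill D n 0 := by
  induction n with
  | zero => rfl
  | succ n ih => intro j; simpa using ih

lemma kill_add (D : J → Derivation ℝ R R) (n : ℕ) : ∀ p q, Kill D n p → Kill D n q → Kill D n (p + q) := by
  induction n with
  | zero => intro p q hp hq; simp only [Kill] at *; simp [hp, hq]
  | succ n ih => intro p q hp hq j; rw [map_add]; exact ih _ _ (hp j) (hq j)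

lemma kill_smul (D : J → Derivation ℝ R R) (n : ℕ) (c : ℝ) : ∀ p, Kill D n p → Kill D n (c • p) := by
  induction n with
  | zero => intro p hp; simp only [Kill] at *; simp [hp]
  | succ n ih => intro p hp j; rw [Derivation.map_smul]; exact ih _ (hp j)

lemma kill_succ (D : J → Derivation ℝ R R) (n : ℕ) : ∀ p, Kill D n p → Kill D (n + 1) p := by
  induction n with
  | zero => intro p hp j; simp only [Kill] at *; simp [hp]
  | succ n ih => intro p hp j; exact ih _ (hp j)

lemma kill_const_mul (D : J → Derivation ℝ R R) (m : R) (hm : ∀ i, D i m = 0) (n : ℕ) :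
    ∀ p, Kill D n p → Kill D n (m * p) := by
  induction n with
  | zero => intro p hp; simp only [Kill] at *; simp [hp]
  | succ n ih =>
    intro p hp j
    rw [Derivation.leibniz, hm]
    simpa using ih _ (hp j)

lemma kill_mul (D : J → Derivation ℝ R R) (y : R) (t : J → ℝ) (hy : ∀ i, D i y = algebraMap ℝ R (t i))
    (n : ℕ) : ∀ p, Kill D n p → Kill D (n + 1) (y * p) := by
  induction n with
  | zero => intro p hp j; simp only [Kill] at *; simp [hp]
  | succ n ih =>
    intro p hp j
    rw [Derivation.leibniz, hy, smul_eq_mul, smul_eq_mul, mul_comm p, ← Algebra.smul_def]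
    exact kill_add _ _ _ _ (ih _ (hp j)) (kill_smul _ _ _ _ hp)

/-- Wick product -/
def W (D : J → Derivation ℝ R R) (y : J → R) : List J → R
  | [] => 1
  | j :: l => y j * W D y l - D j (W D y l)

variable (D : J → Derivation ℝ R R) (y m : J → R) (T : J → J → ℝ)

lemma kill_F
    (hy : ∀ i j, D i (y j) = algebraMap ℝ R (T i j))
    (hm : ∀ i j, D i (m j) = 0)
    (l : List J) : Kill D (l.length + 1) (l.map fun j => y j + m j).prod := by
  induction l with
  | nil => intro j; simp [Kill]
  | cons j l ih =>
    simp only [List.map_cons, List.prod_cons, List.length_cons, add_mul]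
    exact kill_add _ _ _ _ (kill_mul D _ _ (fun i => hy i j) _ _ ih)
      (kill_succ _ _ _ (kill_const_mul D _ (fun i => hm i j) _ _ ih))

lemma kill_neg (n : ℕ) (p : R) (h : Kill D n p) : Kill D n (-p) := by
  simpa using kill_smul D n (-1) p h

lemma kill_W
    (hy : ∀ i j, D i (y j) = algebraMap ℝ R (T i j))
    (l : List J) : Kill D (l.length + 1) (W D y l) := by
  induction l with
  | nil => intro j; simp [Kill, W]
  | cons j l ih =>
    simp only [W, List.length_cons, sub_eq_add_neg]
    exact kill_add _ _ _ _ (kill_mul D _ _ (fun i => hy i j) _ _ ih)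
      (kill_neg _ _ _ (kill_succ _ _ _ (kill_succ _ _ _ (ih j))))

lemma kill_sub
    (hy : ∀ i j, D i (y j) = algebraMap ℝ R (T i j))
    (hm : ∀ i j, D i (m j) = 0)
    (l : List J) : Kill D l.length ((l.map fun j => y j + m j).prod - W D y l) := by
  induction l with
  | nil => simp [Kill, W]
  | cons j l ih =>
    simp only [List.map_cons, List.prod_cons, List.length_cons, W]
    have e : (y j + m j) * (l.map fun j => y j + m j).prod - (y j * W D y l - D j (W D y l))
      = y j * ((l.map fun j => y j + m j).prod - W D y l) + (m j * (l.map fun j => y j + m j).prod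
        + D j (W D y l)) := by ring
    rw [e]
    refine kill_add _ _ _ _ (kill_mul D _ _ (fun i => hy i j) _ _ ih) (kill_add _ _ _ _ ?_ ?_)
    · exact kill_const_mul D _ (fun i => hm i j) _ _ (kill_F D y m T hy hm l)
    · exact kill_succ _ _ _ (kill_W D y T hy l j)

lemma L_delta
    (L : R →ₗ[ℝ] ℝ)
    (hL : ∀ j p, L (y j * p) = L (D j p))
    (j : J) (p q : R) : L (q * (y j * p - D j p)) = L (D j q * p) := by
  have h := hL j (q * p)
  rw [Derivation.leibniz, smul_eq_mul, smul_eq_mul, map_add] at h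
  have e : q * (y j * p - D j p) = y j * (q * p) - q * D j p := by ring
  rw [e, map_sub, h, mul_comm p]; ring

lemma L_kill
    (L : R →ₗ[ℝ] ℝ)
    (hL : ∀ j p, L (y j * p) = L (D j p))
    (l : List J) : ∀ q, Kill D l.length q → L (q * W D y l) = 0 := by
  induction l with
  | nil => intro q hq; simp only [List.length_nil, Kill] at hq; simp [hq]
  | cons j l ih =>
    intro q hq
    rw [W, L_delta D y L hL]
    exact ih _ (hq j)

lemma L_W
    (hy : ∀ i j, D i (y j) = algebraMap ℝ R (T i j))
    (L : R →ₗ[ℝ] ℝ)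
    (hpos : ∀ p, 0 ≤ L (p * p))
    (hL : ∀ j p, L (y j * p) = L (D j p))
    (l : List J) (hT : ∀ j, 0 ≤ T j j) :
    (l.map fun j => T j j).prod * L 1 ≤ L (W D y l * W D y l) := by
  induction l with
  | nil => simp [W]
  | cons j l ih =>
    set w := W D y l with hw
    have e1 : L (W D y (j :: l) * W D y (j :: l)) = T j j * L (w * w) + L (D j w * D j w) := by
      rw [W, L_delta D y L hL, ← hw]
      have e : D j (y j * w - D j w) * w = T j j • (w * w) + w * (y j * D j w - D j (D j w)) := by
        rw [map_sub, Derivation.leibniz, hy, smul_eq_mul, smul_eq_mul, Algebra.smul_def]; ring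
      rw [e, map_add, L_delta D y L hL, map_smul, smul_eq_mul]
    rw [e1, List.map_cons, List.prod_cons, mul_assoc]
    have := mul_le_mul_of_nonneg_left ih (hT j)
    have := hpos (D j w)
    linarith

theorem main_alg
    (hy : ∀ i j, D i (y j) = algebraMap ℝ R (T i j))
    (hm : ∀ i j, D i (m j) = 0)
    (L : R →ₗ[ℝ] ℝ)
    (hpos : ∀ p, 0 ≤ L (p * p))
    (hL : ∀ j p, L (y j * p) = L (D j p))
    (l : List J) (hT : ∀ j, 0 ≤ T j j) :
    (l.map fun j => T j j).prod * L 1 ≤ L ((l.map fun j => y j + m j).prod ^ 2) := by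
  refine (L_W D y T hy L hpos hL l hT).trans ?_
  set F := (l.map fun j => y j + m j).prod
  set w := W D y l
  have h0 : L ((F - w) * w) = 0 := L_kill D y L hL l _ (kill_sub D y m T hy hm l)
  have h1 := hpos (F - w)
  have e : F ^ 2 = (F - w) * (F - w) + (2:ℝ) • ((F - w) * w) + w * w := by
    rw [Algebra.smul_def, map_ofNat]; ring
  rw [e, map_add, map_add, map_smul, h0]
  simp only [smul_eq_mul, mul_zero]
  linarith
end alg
noncomputable section
lemma pdf_eq (x : ℝ) : gaussianPDFReal 0 1 x = (√(2 * Real.pi))⁻¹ * Real.exp (-(1/2) * x ^ 2) := by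
  simp only [gaussianPDFReal, NNReal.coe_one, mul_one, sub_zero]
  congr 2; ring

lemma integrable_gauss_iff (f : ℝ → ℝ) :
    Integrable f (gaussianReal 0 1) ↔ Integrable (fun x => Real.exp (-(1/2) * x ^ 2) * f x) := by
  rw [gaussianReal_of_var_ne_zero _ one_ne_zero, integrable_withDensity_iff_integrable_smul'
    (measurable_gaussianPDF _ _) (by simp [gaussianPDF_lt_top])]
  simp only [toReal_gaussianPDF, pdf_eq, smul_eq_mul, mul_assoc]
  rw [integrable_const_mul_iff]
  have := Real.pi_pos
  exact IsUnit.mk0 _ (by positivity)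

lemma abs_int {s : ℝ} (hs : -1 < s) :
    Integrable (fun x : ℝ => Real.exp (-(1/2) * x ^ 2) * |x| ^ s) := by
  have h := integrableOn_rpow_mul_exp_neg_mul_sq (b := 1/2) (by norm_num) hs
  have h1 : IntegrableOn (fun x : ℝ => Real.exp (-(1/2) * x ^ 2) * |x| ^ s) (Set.Ioi 0) := by
    refine h.congr_fun (fun x hx => ?_) measurableSet_Ioi
    simp only [abs_of_pos (Set.mem_Ioi.1 hx)]; ring
  have h2 : IntegrableOn (fun x : ℝ => Real.exp (-(1/2) * x ^ 2) * |x| ^ s) (Set.Iic 0) := by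
    rw [integrableOn_Iic_iff_integrableOn_Iio]
    have := h1.comp_neg
    simpa using this
  rw [← integrableOn_univ, ← Set.Iic_union_Ioi (a := (0:ℝ))]
  exact h2.union h1

lemma int_w {c a : ℝ} (ha : a < 1) (k : ℕ) :
    Integrable (fun x : ℝ => |c * x| ^ (-a) * x ^ k) (gaussianReal 0 1) := by
  rw [integrable_gauss_iff]
  have h : Integrable (fun x : ℝ => |c| ^ (-a) * (Real.exp (-(1/2) * x ^ 2) * |x| ^ (-a + k))) :=
    (abs_int (by have : (0:ℝ) ≤ k := by positivity
                 linarith)).const_mul _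
  refine h.mono (by fun_prop) ?_
  have : ∀ᵐ x : ℝ, x ≠ 0 := by simp [ae_iff]
  filter_upwards [this] with x hx
  have hx' : 0 < |x| := abs_pos.2 hx
  simp only [norm_mul, abs_mul, Real.norm_eq_abs, norm_pow, Real.mul_rpow (abs_nonneg _) (abs_nonneg _),
    Real.rpow_add hx', Real.rpow_natCast, abs_abs]
  apply le_of_eq; ring

lemma int_pow (k : ℕ) : Integrable (fun x : ℝ => x ^ k) (gaussianReal 0 1) := by
  simpa using int_w (c := 1) (a := 0) (by norm_num) k

/-- Stein recursion for moments -/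
lemma moment_succ (k : ℕ) : ∫ x, x ^ (k + 1) ∂(gaussianReal 0 1) =
    k * ∫ x, x ^ (k - 1) ∂(gaussianReal 0 1) := by
  have i1 := (integrable_gauss_iff _).1 (int_pow (k + 1))
  have i2 := ((integrable_gauss_iff _).1 (int_pow (k - 1))).const_mul (k : ℝ)
  have i3 := (integrable_gauss_iff _).1 (int_pow k)
  have h : ∫ x : ℝ, ((k : ℝ) * (Real.exp (-(1/2) * x ^ 2) * x ^ (k - 1)) -
      Real.exp (-(1/2) * x ^ 2) * x ^ (k + 1)) = 0 := by
    refine integral_eq_zero_of_hasDerivAt_of_integrable (fun x => ?_) (i2.sub i1) i3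
    have h1 : HasDerivAt (fun x : ℝ => -(1/2) * x ^ 2) (-x) x := by
      refine ((hasDerivAt_pow 2 x).const_mul (-(1/2) : ℝ)).congr_deriv ?_
      norm_num; ring
    refine (h1.exp.mul (hasDerivAt_pow k x)).congr_deriv ?_
    rw [pow_succ]; ring
  rw [integral_sub i2 i1, integral_const_mul] at h
  rw [integral_gaussianReal_eq_integral_smul one_ne_zero, integral_gaussianReal_eq_integral_smul one_ne_zero]
  simp only [pdf_eq, smul_eq_mul, mul_assoc, integral_const_mul]
  linear_combination (-(√(2 * Real.pi))⁻¹) * h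

/-- the standard Gaussian measure on `ℝ^(1+d)` -/
def gam (d : ℕ) : Measure (Option (Fin d) → ℝ) := Measure.pi fun _ => gaussianReal 0 1

instance (d : ℕ) : IsProbabilityMeasure (gam d) := by unfold gam; infer_instance

/-- one-variable factors -/
def fac {d : ℕ} (c a : ℝ) (i : Option (Fin d)) (k : ℕ) (x : ℝ) : ℝ :=
  match i with
  | none => |c * x| ^ (-a) * x ^ k
  | some _ => x ^ k

lemma int_fac {d : ℕ} {c a : ℝ} (ha : a < 1) (i : Option (Fin d)) (k : ℕ) :
    Integrable (fac c a i k) (gaussianReal 0 1) := by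
  cases i with
  | none => exact int_w ha k
  | some j => exact int_pow k

lemma mono_eq {d : ℕ} (c a : ℝ) (e : Option (Fin d) →₀ ℕ) (r : ℝ) (z : Option (Fin d) → ℝ) :
    |c * z none| ^ (-a) * MvPolynomial.eval z (MvPolynomial.monomial e r)
      = r * ∏ i, fac c a i (e i) (z i) := by
  rw [MvPolynomial.eval_monomial, Finsupp.prod_fintype _ _ (by simp), Fintype.prod_option,
    Fintype.prod_option]
  simp only [fac]; ring

lemma int_poly {d : ℕ} {c a : ℝ} (ha : a < 1) (p : MvPolynomial (Option (Fin d)) ℝ) :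
    Integrable (fun z => |c * z none| ^ (-a) * MvPolynomial.eval z p) (gam d) := by
  induction p using MvPolynomial.induction_on' with
  | monomial e r =>
    simp only [mono_eq]
    exact (Integrable.fintype_prod (fun i => int_fac ha i (e i))).const_mul r
  | add p q hp hq =>
    simp only [map_add, mul_add]
    exact hp.add hq

/-- the weighted expectation functional -/
def Lf (d : ℕ) (c a : ℝ) (ha : a < 1) : MvPolynomial (Option (Fin d)) ℝ →ₗ[ℝ] ℝ where
  toFun p := ∫ z, |c * z none| ^ (-a) * MvPolynomial.eval z p ∂(gam d)
  map_add' p q := by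
    simp only [map_add, mul_add]
    exact integral_add (int_poly ha p) (int_poly ha q)
  map_smul' r p := by
    simp only [MvPolynomial.smul_eval, RingHom.id_apply, smul_eq_mul]
    rw [← integral_const_mul]
    congr 1; ext z; ring

lemma Lf_pos (d : ℕ) (c a : ℝ) (ha : a < 1) (p : MvPolynomial (Option (Fin d)) ℝ) :
    0 ≤ Lf d c a ha (p * p) := by
  refine integral_nonneg fun z => ?_
  simp only [map_mul, Pi.zero_apply]
  exact mul_nonneg (by positivity) (mul_self_nonneg _)

lemma Lf_mono (d : ℕ) (c a : ℝ) (ha : a < 1) (e : Option (Fin d) →₀ ℕ) (r : ℝ) :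
    Lf d c a ha (MvPolynomial.monomial e r) =
      r * ∏ i, ∫ x, fac c a i (e i) x ∂(gaussianReal 0 1) := by
  change ∫ z, _ ∂(gam d) = _
  simp only [mono_eq]
  rw [integral_const_mul, gam, integral_fintype_prod_eq_prod]

lemma Lf_ibp (d : ℕ) (c a : ℝ) (ha : a < 1) (k : Fin d) (p : MvPolynomial (Option (Fin d)) ℝ) :
    Lf d c a ha (MvPolynomial.X (some k) * p) = Lf d c a ha (MvPolynomial.pderiv (some k) p) := by
  classical
  induction p using MvPolynomial.induction_on' with
  | add p q hp hq => rw [mul_add, map_add, map_add, map_add, hp, hq]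
  | monomial e r =>
    rw [MvPolynomial.pderiv_monomial, MvPolynomial.X, MvPolynomial.monomial_mul, Lf_mono, Lf_mono,
      ← Finset.mul_prod_erase _ _ (Finset.mem_univ (some k)),
      ← Finset.mul_prod_erase _ _ (Finset.mem_univ (some k))]
    have h1 : ∏ i ∈ Finset.univ.erase (some k), ∫ x, fac c a i ((Finsupp.single (some k) 1 + e : Option (Fin d) →₀ ℕ) i) x
        ∂(gaussianReal 0 1) = ∏ i ∈ Finset.univ.erase (some k), ∫ x, fac c a i (e i) x
        ∂(gaussianReal 0 1) := by
      refine Finset.prod_congr rfl fun i hi => ?_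
      rw [Finsupp.add_apply, Finsupp.single_eq_of_ne (Finset.ne_of_mem_erase hi), zero_add]
    have h2 : ∏ i ∈ Finset.univ.erase (some k), ∫ x, fac c a i ((e - Finsupp.single (some k) 1 : Option (Fin d) →₀ ℕ) i) x
        ∂(gaussianReal 0 1) = ∏ i ∈ Finset.univ.erase (some k), ∫ x, fac c a i (e i) x
        ∂(gaussianReal 0 1) := by
      refine Finset.prod_congr rfl fun i hi => ?_
      rw [Finsupp.tsub_apply, Finsupp.single_eq_of_ne (Finset.ne_of_mem_erase hi), tsub_zero]
    rw [h1, h2]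
    simp only [fac, Finsupp.add_apply, Finsupp.tsub_apply, Finsupp.single_eq_same]
    rw [add_comm 1, moment_succ]
    ring

lemma der_sum {d : ℕ} (v : Fin d → ℝ) (p : MvPolynomial (Option (Fin d)) ℝ) :
    (∑ k, v k • MvPolynomial.pderiv (some k) : Derivation ℝ (MvPolynomial (Option (Fin d)) ℝ)
      (MvPolynomial (Option (Fin d)) ℝ)) p = ∑ k, v k • MvPolynomial.pderiv (some k) p := by
  have h := congrFun (map_sum (Derivation.coeFnAddMonoidHom (R := ℝ)
    (A := MvPolynomial (Option (Fin d)) ℝ) (M := MvPolynomial (Option (Fin d)) ℝ))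
    (fun k => v k • MvPolynomial.pderiv (some k)) Finset.univ) p
  rw [Finset.sum_apply] at h
  exact h

lemma main_gam {n d : ℕ} (v : Fin d → Fin n → ℝ) (b : Fin n → ℝ) (c a : ℝ) (ha : a < 1) :
    (∏ j, ∑ k, v k j ^ 2) * ∫ z, |c * z none| ^ (-a) ∂(gam d) ≤
      ∫ z, |c * z none| ^ (-a) * ∏ j, (∑ k, v k j * z (some k) + b j * z none) ^ 2 ∂(gam d) := by
  have h := main_alg (R := MvPolynomial (Option (Fin d)) ℝ) (J := Fin n)
    (fun j => ∑ k, v k j • MvPolynomial.pderiv (some k))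
    (fun j => ∑ k, v k j • MvPolynomial.X (some k))
    (fun j => b j • MvPolynomial.X none)
    (fun i j => ∑ k, v k i * v k j)
    (fun i j => by
      classical
      rw [der_sum]
      simp only [map_sum, Derivation.map_smul, MvPolynomial.pderiv_X, map_mul]
      refine Finset.sum_congr rfl fun k _ => ?_
      rw [Finset.sum_eq_single k]
      · simp [Algebra.smul_def, MvPolynomial.algebraMap_eq]
      · intro l _ hl
        simp [hl]
      · simp)
    (fun i j => by
      classical
      rw [der_sum]
      simp [Derivation.map_smul, MvPolynomial.pderiv_X])
    (Lf d c a ha) (Lf_pos d c a ha)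
    (fun j p => by
      rw [der_sum]
      simp only [map_sum, Finset.sum_mul, smul_mul_assoc, map_smul, Lf_ibp])
    (List.finRange n)
    (fun j => Finset.sum_nonneg fun k _ => mul_self_nonneg _)
  rw [← Fin.prod_univ_def, ← Fin.prod_univ_def] at h
  simp only [Lf, LinearMap.coe_mk, AddHom.coe_mk, map_one, mul_one, map_pow, map_prod, map_add,
    map_sum, MvPolynomial.smul_eval, MvPolynomial.eval_X, ← Finset.prod_pow, ← pow_two] at h
  exact h
/-- the linear map producing the Gaussian vector -/
def Bmap {N d : ℕ} (b : Fin N → ℝ) (v : Fin d → Fin N → ℝ) (z : Option (Fin d) → ℝ) : Fin N → ℝ :=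
  fun j => ∑ k, v k j * z (some k) + b j * z none

lemma measurable_Bmap {N d : ℕ} (b : Fin N → ℝ) (v : Fin d → Fin N → ℝ) :
    Measurable (Bmap b v) := by
  unfold Bmap; fun_prop

lemma charFun_Bmap {N d : ℕ} (b : Fin N → ℝ) (v : Fin d → Fin N → ℝ) (u : Fin N → ℝ) :
    ∫ z, Complex.exp (Complex.I * ((u ⬝ᵥ Bmap b v z : ℝ) : ℂ)) ∂(gam d) =
      Complex.exp (-((((u ⬝ᵥ b) ^ 2 + ∑ k, (u ⬝ᵥ v k) ^ 2 : ℝ) : ℂ)) / 2) := by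
  let t : Option (Fin d) → ℝ := fun i => match i with
    | none => u ⬝ᵥ b
    | some k => u ⬝ᵥ v k
  have h1 : ∀ z, u ⬝ᵥ Bmap b v z = ∑ i, t i * z i := by
    intro z
    rw [Fintype.sum_option]
    simp only [t, Bmap, dotProduct, mul_add, Finset.sum_add_distrib, Finset.sum_mul, Finset.mul_sum]
    rw [add_comm, Finset.sum_comm]
    simp only [mul_assoc]
  have h2 : ∀ z : Option (Fin d) → ℝ, Complex.exp (Complex.I * ((u ⬝ᵥ Bmap b v z : ℝ) : ℂ)) =
      ∏ i, Complex.exp (t i * z i * Complex.I) := by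
    intro z
    rw [h1, ← Complex.exp_sum]
    push_cast
    rw [Finset.mul_sum]
    congr 1
    exact Finset.sum_congr rfl fun i _ => by ring
  simp only [h2]
  rw [gam, integral_fintype_prod_eq_prod (fun i (x : ℝ) => Complex.exp (t i * x * Complex.I))]
  simp only [← charFun_apply_real, charFun_gaussianReal]
  rw [← Complex.exp_sum]
  congr 1
  rw [Fintype.sum_option]
  simp only [t]
  push_cast
  rw [neg_div, add_div, Finset.sum_div, neg_add, ← Finset.sum_neg_distrib]
  simp

lemma law_ext {N : ℕ} (P Q : Measure (Fin N → ℝ)) [IsFiniteMeasure P] [IsFiniteMeasure Q]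
    (h : ∀ u : Fin N → ℝ, ∫ x, Complex.exp (Complex.I * ((u ⬝ᵥ x : ℝ) : ℂ)) ∂P =
      ∫ x, Complex.exp (Complex.I * ((u ⬝ᵥ x : ℝ) : ℂ)) ∂Q) : P = Q := by
  refine Measure.ext_of_charFunDual ?_
  ext l
  rw [charFunDual_apply, charFunDual_apply]
  have e : ∀ x, l x = (fun i => l (Pi.single i 1)) ⬝ᵥ x := by
    intro x
    conv_lhs => rw [pi_eq_sum_univ' x]
    simp [dotProduct, mul_comm, Pi.single]
  have e2 : (fun x => Complex.exp ((l x : ℂ) * Complex.I)) = fun x =>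
      Complex.exp (Complex.I * (((fun i => l (Pi.single i 1)) ⬝ᵥ x : ℝ) : ℂ)) := by
    funext x
    rw [e x, mul_comm]
  rw [e2]
  exact h _

lemma psd_of_char {Ω : Type*} [MeasurableSpace Ω] (μ : Measure Ω) [IsProbabilityMeasure μ]
    {N : ℕ} (X : Ω → (Fin N → ℝ)) (S : Matrix (Fin N) (Fin N) ℝ)
    (hGauss : ∀ u : Fin N → ℝ,
      ∫ ω, Complex.exp (Complex.I * ((u ⬝ᵥ X ω : ℝ) : ℂ)) ∂μ =
        Complex.exp (-(((u ⬝ᵥ S *ᵥ u : ℝ) : ℂ)) / 2)) (u : Fin N → ℝ) : 0 ≤ u ⬝ᵥ S *ᵥ u := by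
  have h := norm_integral_le_integral_norm (μ := μ)
    (fun ω => Complex.exp (Complex.I * ((u ⬝ᵥ X ω : ℝ) : ℂ)))
  rw [hGauss u] at h
  simp only [Complex.norm_exp_I_mul_ofReal, integral_const, probReal_univ, smul_eq_mul,
    mul_one] at h
  rw [Complex.norm_exp] at h
  have h2 : (-(((u ⬝ᵥ S *ᵥ u : ℝ) : ℂ)) / 2).re = -(u ⬝ᵥ S *ᵥ u) / 2 := by
    have : (-(((u ⬝ᵥ S *ᵥ u : ℝ) : ℂ)) / 2) = ((-(u ⬝ᵥ S *ᵥ u) / 2 : ℝ) : ℂ) := by push_cast; rfl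
    rw [this, Complex.ofReal_re]
  rw [h2, Real.exp_le_one_iff] at h
  linarith

lemma second_moment {Ω : Type*} [MeasurableSpace Ω] (μ : Measure Ω) [IsProbabilityMeasure μ]
    {N : ℕ} (X : Ω → (Fin N → ℝ)) (hXm : Measurable X) (S : Matrix (Fin N) (Fin N) ℝ)
    (hGauss : ∀ u : Fin N → ℝ,
      ∫ ω, Complex.exp (Complex.I * ((u ⬝ᵥ X ω : ℝ) : ℂ)) ∂μ =
        Complex.exp (-(((u ⬝ᵥ S *ᵥ u : ℝ) : ℂ)) / 2)) (i : Fin N) (hi : 0 < S i i) :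
    ∫ ω, (X ω i) ^ 2 ∂μ = S i i := by
  have hm : Measurable fun ω => X ω i := (measurable_pi_apply i).comp hXm
  have hlaw : μ.map (fun ω => X ω i) = gaussianReal 0 (S i i).toNNReal := by
    have : IsProbabilityMeasure (μ.map (fun ω => X ω i)) := Measure.isProbabilityMeasure_map hm.aemeasurable
    refine Measure.ext_of_charFun ?_
    ext t
    rw [charFun_gaussianReal, charFun_apply_real, integral_map hm.aemeasurable (by fun_prop)]
    have h := hGauss (Pi.single i t)
    simp only [single_dotProduct, mulVec_single, Pi.smul_apply] at h
    convert h using 1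
    · congr 1; ext ω; congr 1; push_cast; ring
    · congr 1; simp [Real.coe_toNNReal _ hi.le]; ring
  have h1 : ∫ ω, (X ω i) ^ 2 ∂μ = ∫ x, x ^ 2 ∂(μ.map (fun ω => X ω i)) := by
    rw [integral_map hm.aemeasurable (by fun_prop)]
  have h2 := variance_fun_id_gaussianReal (μ := 0) (v := (S i i).toNNReal)
  rw [variance_of_integral_eq_zero (by fun_prop) (by simp)] at h2
  rw [h1, hlaw]
  rw [Real.coe_toNNReal _ hi.le] at h2
  exact h2

lemma exists_factor {N : ℕ} (S : Matrix (Fin (N + 1)) (Fin (N + 1)) ℝ) (hS : S.IsSymm)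
    (h0 : 0 < S 0 0) (hpsd : ∀ u, 0 ≤ u ⬝ᵥ S *ᵥ u) :
    ∃ (d : ℕ) (v : Fin d → Fin (N + 1) → ℝ),
      ∀ i j, S i j - S i 0 * S 0 j / S 0 0 = ∑ k, v k i * v k j := by
  let T : Matrix (Fin (N + 1)) (Fin (N + 1)) ℝ := Matrix.of fun i j => S i j - S i 0 * S 0 j / S 0 0
  have hs : ∀ i j, S i j = S j i := fun i j => hS.apply j i
  have hT : T.PosSemidef := by
    refine Matrix.PosSemidef.of_dotProduct_mulVec_nonneg ?_ ?_
    · ext i j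
      simp only [T, conjTranspose_apply, of_apply, star_trivial]
      rw [hs j i, hs j 0, hs 0 i]; ring
    · intro u
      have h := hpsd (u - Pi.single 0 ((S 0 ⬝ᵥ u) / S 0 0))
      have e0 : ∀ i, (S *ᵥ u) i = S i ⬝ᵥ u := fun i => rfl
      have eT : T *ᵥ u = S *ᵥ u - ((S 0 ⬝ᵥ u) / S 0 0) • (fun i => S i 0) := by
        ext i
        simp only [T, mulVec, dotProduct, of_apply, Pi.sub_apply, Pi.smul_apply, smul_eq_mul, sub_mul,
          Finset.sum_sub_distrib, Finset.sum_div, Finset.sum_mul]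
        congr 1
        exact Finset.sum_congr rfl fun j _ => by ring
      have eu : u ⬝ᵥ (fun i => S i 0) = S 0 ⬝ᵥ u := by
        rw [dotProduct_comm]; congr 1; ext i; exact hs i 0
      rw [star_trivial, eT, dotProduct_sub, dotProduct_smul, eu, smul_eq_mul]
      have ec : S.col 0 = fun i => S i 0 := rfl
      rw [mulVec_sub, sub_dotProduct, dotProduct_sub, dotProduct_sub, mulVec_single,
        single_dotProduct, single_dotProduct, e0] at h
      simp only [ec, dotProduct_smul, Pi.smul_apply, eu, op_smul_eq_smul, smul_eq_mul] at h
      refine h.trans_eq ?_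
      field_simp
      ring
  obtain ⟨d, v, hv⟩ := Matrix.posSemidef_iff_eq_sum_vecMulVec.1 hT
  refine ⟨d, v, fun i j => ?_⟩
  have := congrFun (congrFun hv i) j
  simpa [T, Matrix.sum_apply, vecMulVec_apply] using this
end
end GPIAux

theorem gpi_neg_power_times_squares
    {Ω : Type*} [MeasurableSpace Ω] (μ : Measure Ω) [IsProbabilityMeasure μ]
    {n : ℕ} (X : Ω → (Fin (n + 1) → ℝ)) (hXm : Measurable X)
    (S : Matrix (Fin (n + 1)) (Fin (n + 1)) ℝ) (hS : S.IsSymm)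
    (hGauss : ∀ u : Fin (n + 1) → ℝ,
      ∫ ω, Complex.exp (Complex.I * ((u ⬝ᵥ X ω : ℝ) : ℂ)) ∂μ =
        Complex.exp (-(((u ⬝ᵥ S *ᵥ u : ℝ) : ℂ)) / 2))
    (hvar : ∀ i, 0 < S i i)
    {α₁ : ℝ} (hα₁ : α₁ ∈ Set.Ioo (0 : ℝ) 1) :
    (∏ i : Fin n,
        (1 - (S 0 i.succ / (Real.sqrt (S 0 0) * Real.sqrt (S i.succ i.succ))) ^ 2)) *
      (∫ ω, |X ω 0| ^ (-α₁) ∂μ) * ∏ i : Fin n, ∫ ω, (X ω i.succ) ^ 2 ∂μ ≤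
      ∫ ω, |X ω 0| ^ (-α₁) * ∏ i : Fin n, (X ω i.succ) ^ 2 ∂μ := by
  have h0 := hvar 0
  have hs : ∀ i j, S i j = S j i := fun i j => hS.apply j i
  obtain ⟨d, v, hv⟩ := GPIAux.exists_factor S hS h0 (GPIAux.psd_of_char μ X S hGauss)
  have hv0 : ∀ k, v k 0 = 0 := by
    have h := hv 0 0
    rw [mul_div_assoc, div_self h0.ne', mul_one, sub_self] at h
    intro k
    have := (Finset.sum_eq_zero_iff_of_nonneg (fun k _ => mul_self_nonneg (v k 0))).1 h.symm k
      (Finset.mem_univ k)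
    exact mul_self_eq_zero.1 this
  let b : Fin (n + 1) → ℝ := fun j => S 0 j / √(S 0 0)
  have hb : ∀ i j, b i * b j = S i 0 * S 0 j / S 0 0 := by
    intro i j
    simp only [b]
    rw [div_mul_div_comm, Real.mul_self_sqrt h0.le, hs i 0]
  have hb0 : b 0 = √(S 0 0) := by
    simp only [b]; exact Real.div_sqrt
  have hlaw : μ.map X = (GPIAux.gam d).map (GPIAux.Bmap b v) := by
    have hB := GPIAux.measurable_Bmap b v
    have : IsProbabilityMeasure (μ.map X) := Measure.isProbabilityMeasure_map hXm.aemeasurable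
    have : IsProbabilityMeasure ((GPIAux.gam d).map (GPIAux.Bmap b v)) :=
      Measure.isProbabilityMeasure_map hB.aemeasurable
    refine GPIAux.law_ext _ _ fun u => ?_
    have hc : Continuous fun x : Fin (n + 1) → ℝ => Complex.exp (Complex.I * ((u ⬝ᵥ x : ℝ) : ℂ)) := by
      unfold dotProduct; fun_prop
    rw [integral_map hXm.aemeasurable hc.aestronglyMeasurable,
      integral_map hB.aemeasurable hc.aestronglyMeasurable, hGauss, GPIAux.charFun_Bmap]
    congr 4
    simp only [dotProduct, mulVec, pow_two, Finset.sum_mul_sum]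
    simp only [Finset.mul_sum]
    rw [Finset.sum_comm (s := (Finset.univ : Finset (Fin d))), ← Finset.sum_add_distrib]
    refine Finset.sum_congr rfl fun i _ => ?_
    rw [Finset.sum_comm (s := (Finset.univ : Finset (Fin d))), ← Finset.sum_add_distrib]
    refine Finset.sum_congr rfl fun j _ => ?_
    have e : S i j = b i * b j + ∑ k, v k i * v k j := by rw [← hv, hb]; ring
    rw [e, add_mul, mul_add, Finset.sum_mul, Finset.mul_sum]
    congr 1
    · ring
    · exact Finset.sum_congr rfl fun k _ => by ring
  have hint : ∀ f : (Fin (n + 1) → ℝ) → ℝ, Measurable f →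
      ∫ ω, f (X ω) ∂μ = ∫ z, f (GPIAux.Bmap b v z) ∂(GPIAux.gam d) := by
    intro f hf
    rw [← integral_map hXm.aemeasurable hf.aestronglyMeasurable, hlaw,
      integral_map (GPIAux.measurable_Bmap b v).aemeasurable hf.aestronglyMeasurable]
  have hB0 : ∀ z, GPIAux.Bmap b v z 0 = √(S 0 0) * z none := by
    intro z; simp [GPIAux.Bmap, hv0, hb0]
  have i1 := hint (fun x => |x 0| ^ (-α₁)) (by fun_prop)
  have i2 := hint (fun x => |x 0| ^ (-α₁) * ∏ i : Fin n, (x i.succ) ^ 2) (by fun_prop)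
  simp only [hB0] at i1 i2
  have key := GPIAux.main_gam (fun k (j : Fin n) => v k j.succ) (fun j => b j.succ) √(S 0 0) α₁ hα₁.2
  have hprod : (∏ i : Fin n,
        (1 - (S 0 i.succ / (Real.sqrt (S 0 0) * Real.sqrt (S i.succ i.succ))) ^ 2)) *
        ∏ i : Fin n, ∫ ω, (X ω i.succ) ^ 2 ∂μ = ∏ j : Fin n, ∑ k, v k j.succ ^ 2 := by
    rw [← Finset.prod_mul_distrib]
    refine Finset.prod_congr rfl fun i _ => ?_
    rw [GPIAux.second_moment μ X hXm S hGauss _ (hvar _)]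
    simp only [pow_two (v _ _), ← hv]
    have hi := hvar i.succ
    rw [div_pow, mul_pow, Real.sq_sqrt h0.le, Real.sq_sqrt hi.le, hs i.succ 0]
    field_simp
  rw [mul_right_comm, hprod, i1, i2]
  exact key
end

section
/- Let (X₁,X₂,X₃,X₄) be a centered Gaussian random vector in ℝ⁴ with nondegenerate components and correlation coefficients ρ_{1i} between X₁ and X_i. Then for every α₁ ∈ (0,1) and all positive even integers α₂,α₃,α₄, E[|X₁|^{-α₁}|X₂|^{α₂}|X₃|^{α₃}|X₄|^{α₄}] ≥ ∏_{i=2}^4 (1-ρ_{1i}²)^{α_i/2} · E[|X₁|^{-α₁}] · ∏_{i=2}^4 E[|X_i|^{α_i}]. -/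
open MeasureTheory Matrix

namespace GPI

/-- The double factorial (odd) as a real number. -/
noncomputable def df : ℕ → ℝ
  | 0 => 1
  | n + 1 => (2 * n + 1) * df n

lemma df_pos (n : ℕ) : 0 < df n := by
  induction n with
  | zero => simp [df]
  | succ n ih => simp only [df]; positivity

lemma df_mul_le (p q : ℕ) : df p * df q ≤ df (p + q) := by
  induction p with
  | zero => simp [df]
  | succ p ih =>
    have : p + 1 + q = (p + q) + 1 := by ring
    rw [this]
    simp only [df]
    have h1 := df_pos p
    have h2 := df_pos q
    have h3 := df_pos (p + q)
    push_cast
    have hq : (0 : ℝ) ≤ q := Nat.cast_nonneg q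
    have hp : (0 : ℝ) ≤ p := Nat.cast_nonneg p
    calc (2 * (p : ℝ) + 1) * df p * df q = (2 * (p : ℝ) + 1) * (df p * df q) := by ring
      _ ≤ (2 * (p : ℝ) + 1) * df (p + q) := by gcongr
      _ ≤ _ := by gcongr; linarith

section abstract_part

variable {V : Type*} [NormedAddCommGroup V] [InnerProductSpace ℝ V]
  {A : Type*} [CommRing A] [Algebra ℝ A]

/-- A Gaussian functional on an algebra. -/
structure GF (Λ : V →ₗ[ℝ] A) (L : A →ₗ[ℝ] ℝ) (D : V → Derivation ℝ A A) : Prop where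
  one : L 1 = 1
  dl : ∀ e u, D e (Λ u) = algebraMap ℝ A (inner ℝ e u)
  st : ∀ e a, L (Λ e * a) = L (D e a)

variable {Λ : V →ₗ[ℝ] A} {L : A →ₗ[ℝ] ℝ} {D : V → Derivation ℝ A A}

lemma L_alg (c : ℝ) (a : A) : L (algebraMap ℝ A c * a) = c * L a := by
  rw [← Algebra.smul_def]; simp

lemma GF.stein (h : GF Λ L D) (e u v w : V) (i j k : ℕ) :
    L (Λ e * (Λ u ^ i * Λ v ^ j * Λ w ^ k)) =
      i * inner ℝ e u * L (Λ u ^ (i - 1) * Λ v ^ j * Λ w ^ k) +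
      j * inner ℝ e v * L (Λ u ^ i * Λ v ^ (j - 1) * Λ w ^ k) +
      k * inner ℝ e w * L (Λ u ^ i * Λ v ^ j * Λ w ^ (k - 1)) := by
  have key : D e (Λ u ^ i * Λ v ^ j * Λ w ^ k) =
      algebraMap ℝ A (i * inner ℝ e u) * (Λ u ^ (i - 1) * Λ v ^ j * Λ w ^ k) +
      algebraMap ℝ A (j * inner ℝ e v) * (Λ u ^ i * Λ v ^ (j - 1) * Λ w ^ k) +
      algebraMap ℝ A (k * inner ℝ e w) * (Λ u ^ i * Λ v ^ j * Λ w ^ (k - 1)) := by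
    simp only [Derivation.leibniz, Derivation.leibniz_pow, h.dl, smul_eq_mul, nsmul_eq_mul,
      map_mul, map_natCast]
    ring
  rw [h.st, key, map_add, map_add, L_alg, L_alg, L_alg]

lemma GF.cont (h : GF Λ L D) (N : ℕ) : ∀ i j k : ℕ, i + j + k ≤ N →
    Continuous fun x : V × V × V => L (Λ x.1 ^ i * Λ x.2.1 ^ j * Λ x.2.2 ^ k) := by
  induction N with
  | zero =>
    intro i j k hN
    obtain rfl : i = 0 := by omega
    obtain rfl : j = 0 := by omega
    obtain rfl : k = 0 := by omega
    simp only [pow_zero, mul_one]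
    exact continuous_const
  | succ N ih =>
    intro i j k hN
    rcases i with _ | i
    · rcases j with _ | j
      · rcases k with _ | k
        · exact ih 0 0 0 (by omega)
        · have : (fun x : V × V × V => L (Λ x.1 ^ 0 * Λ x.2.1 ^ 0 * Λ x.2.2 ^ (k+1))) =
            fun x => L (Λ x.2.2 * (Λ x.1 ^ 0 * Λ x.2.1 ^ 0 * Λ x.2.2 ^ k)) := by
            funext x; congr 1; ring
          rw [this]
          simp only [h.stein]
          have h1 := ih 0 0 k (by omega)
          have h2 := ih 0 0 (k-1) (by omega)
          exact (((continuous_const.mul (by fun_prop)).mul h1).add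
            ((continuous_const.mul (by fun_prop)).mul h1)).add
              ((continuous_const.mul (by fun_prop)).mul h2)
      · have : (fun x : V × V × V => L (Λ x.1 ^ 0 * Λ x.2.1 ^ (j+1) * Λ x.2.2 ^ k)) =
            fun x => L (Λ x.2.1 * (Λ x.1 ^ 0 * Λ x.2.1 ^ j * Λ x.2.2 ^ k)) := by
            funext x; congr 1; ring
        rw [this]
        simp only [h.stein]
        have h1 := ih 0 j k (by omega)
        have h2 := ih 0 j (k-1) (by omega)
        have h3 := ih 0 (j-1) k (by omega)
        exact (((continuous_const.mul (by fun_prop)).mul h1).add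
          ((continuous_const.mul (by fun_prop)).mul h3)).add
            ((continuous_const.mul (by fun_prop)).mul h2)
    · have : (fun x : V × V × V => L (Λ x.1 ^ (i+1) * Λ x.2.1 ^ j * Λ x.2.2 ^ k)) =
            fun x => L (Λ x.1 * (Λ x.1 ^ i * Λ x.2.1 ^ j * Λ x.2.2 ^ k)) := by
            funext x; congr 1; ring
      rw [this]
      simp only [h.stein]
      have h1 := ih (i-1) j k (by omega)
      have h2 := ih i j (k-1) (by omega)
      have h3 := ih i (j-1) k (by omega)
      exact (((continuous_const.mul (by fun_prop)).mul h1).add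
        ((continuous_const.mul (by fun_prop)).mul h3)).add
          ((continuous_const.mul (by fun_prop)).mul h2)

lemma hasDeriv_pow (a b : A) (n : ℕ) : ∀ Φ : A,
    HasDerivAt (fun t : ℝ => L ((a + t • b) ^ n * Φ)) (n * L (a ^ (n - 1) * b * Φ)) 0 := by
  induction n with
  | zero => intro Φ; simpa using hasDerivAt_const (0 : ℝ) (L Φ)
  | succ n ih =>
    intro Φ
    have h1 := ih (a * Φ)
    have h2 := (hasDerivAt_id (0 : ℝ)).mul (ih (b * Φ))
    have h3 := h1.add h2
    have e : (fun t : ℝ => L ((a + t • b) ^ (n + 1) * Φ)) =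
        (fun t : ℝ => L ((a + t • b) ^ n * (a * Φ))) +
          id * (fun t : ℝ => L ((a + t • b) ^ n * (b * Φ))) := by
      funext t
      simp only [Pi.add_apply, Pi.mul_apply, id]
      rw [← smul_eq_mul (a := t), ← map_smul, ← map_add]
      congr 1
      simp only [Algebra.smul_def]
      ring
    rw [e]
    refine HasDerivAt.congr_deriv h3 ?_
    rcases n with _ | n
    · simp
    · simp only [Nat.add_sub_cancel, id, one_mul, zero_smul, add_zero, zero_mul]
      have e1 : a ^ (n + 1) * b * Φ = a ^ (n + 1) * (b * Φ) := by ring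
      have e2 : a ^ n * b * (a * Φ) = a ^ (n + 1) * (b * Φ) := by ring
      rw [e1, e2]; push_cast; ring

lemma crit (p : ℕ) (Φ : A) (u : V) (hu : ‖u‖ = 1)
    (hmin : ∀ x : V, ‖x‖ = 1 → L (Λ u ^ (2 * p + 2) * Φ) ≤ L (Λ x ^ (2 * p + 2) * Φ)) (e : V) :
    L (Λ u ^ (2 * p + 1) * Λ e * Φ) = inner ℝ u e * L (Λ u ^ (2 * p + 2) * Φ) := by
  set F := L (Λ u ^ (2 * p + 2) * Φ) with hF
  have hom : ∀ x : V, (‖x‖ ^ 2) ^ (p + 1) * F ≤ L (Λ x ^ (2 * p + 2) * Φ) := by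
    intro x
    by_cases hx : x = 0
    · subst hx; simp
    · have hx' : ‖x‖ ≠ 0 := by simpa using hx
      have h1 := hmin (‖x‖⁻¹ • x) (by rw [norm_smul]; simp [hx'])
      rw [map_smul, smul_pow, smul_mul_assoc, map_smul, smul_eq_mul] at h1
      have h2 : (‖x‖ ^ 2) ^ (p + 1) = ‖x‖ ^ (2 * p + 2) := by rw [← pow_mul]; ring_nf
      rw [h2]
      have h3 : 0 < ‖x‖ ^ (2 * p + 2) := by positivity
      calc _ ≤ ‖x‖ ^ (2 * p + 2) * (‖x‖⁻¹ ^ (2 * p + 2) * L (Λ x ^ (2 * p + 2) * Φ)) := by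
            gcongr
        _ = _ := by rw [← mul_assoc, ← mul_pow, mul_inv_cancel₀ hx', one_pow, one_mul]
  let c : ℝ := inner ℝ u e
  have hn : ∀ t : ℝ, ‖u + t • e‖ ^ 2 = 1 + 2 * c * t + ‖e‖ ^ 2 * t ^ 2 := by
    intro t
    rw [norm_add_sq_real, hu, inner_smul_right, norm_smul, mul_pow]
    simp [c]; ring
  have d1 := hasDeriv_pow (L := L) (Λ u) (Λ e) (2 * p + 2) Φ
  have d2 : HasDerivAt (fun t : ℝ => (1 + 2 * c * t + ‖e‖ ^ 2 * t ^ 2) ^ (p + 1) * F)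
      (((p + 1 : ℕ) : ℝ) * (2 * c) * F) 0 := by
    have a1 : HasDerivAt (fun t : ℝ => 1 + 2 * c * t + ‖e‖ ^ 2 * t ^ 2)
        (2 * c * 1 + ‖e‖ ^ 2 * (2 * 0)) 0 := by
      have b1 := ((hasDerivAt_id (0 : ℝ)).const_mul (2 * c)).const_add 1
      have b2 := ((hasDerivAt_pow 2 (0 : ℝ))).const_mul (‖e‖ ^ 2)
      exact (b1.add b2).congr_deriv (by simp)
    have := (a1.pow (p + 1)).mul_const F
    simpa using this
  have d3 := d1.sub d2
  have hm : IsLocalMin ((fun t : ℝ => L ((Λ u + t • Λ e) ^ (2 * p + 2) * Φ)) -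
      (fun t : ℝ => (1 + 2 * c * t + ‖e‖ ^ 2 * t ^ 2) ^ (p + 1) * F)) 0 := by
    apply Filter.Eventually.of_forall
    intro t
    have := hom (u + t • e)
    rw [hn] at this
    simp only [Pi.sub_apply, mul_zero, add_zero, zero_smul, ne_eq, OfNat.ofNat_ne_zero,
      not_false_eq_true, zero_pow, one_pow, one_mul]
    rw [map_add, map_smul] at this
    rw [← hF]
    linarith
  have h0 := hm.hasDerivAt_eq_zero d3
  have e1 : 2 * p + 2 - 1 = 2 * p + 1 := by omega
  rw [e1] at h0
  push_cast at h0
  have hp : (0 : ℝ) < 2 * p + 2 := by positivity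
  have : (2 * (p : ℝ) + 2) * (L (Λ u ^ (2 * p + 1) * Λ e * Φ) - c * F) = 0 := by
    linarith
  rcases mul_eq_zero.1 this with h | h
  · linarith
  · linarith

/-- one-dimensional moments -/
lemma GF.mom (h : GF Λ L D) (u : V) (p : ℕ) :
    L (Λ u ^ (2 * p)) = df p * (‖u‖ ^ 2) ^ p := by
  induction p with
  | zero => simp [df, h.one]
  | succ p ih =>
    have := h.stein u u 0 0 (2 * p + 1) 0 0
    simp only [pow_zero, mul_one, CharP.cast_eq_zero, zero_mul, add_zero] at this
    have e1 : 2 * p + 1 - 1 = 2 * p := by omega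
    rw [e1, ih] at this
    have e2 : Λ u ^ (2 * (p + 1)) = Λ u * Λ u ^ (2 * p + 1) := by ring
    rw [e2, this, real_inner_self_eq_norm_sq]
    simp only [df]
    push_cast; ring

lemma coll (u v : V) (hu : ‖u‖ = 1) (hv : ‖v‖ = 1) (k : ℝ) (h : v = k • u) (q : ℕ) :
    Λ v ^ (2 * q) = Λ u ^ (2 * q) := by
  have hk : k ^ 2 = 1 := by
    rw [h, norm_smul, hu, mul_one, Real.norm_eq_abs] at hv
    rw [← sq_abs, hv, one_pow]
  rw [h, map_smul, smul_pow, pow_mul, hk, one_pow, one_smul]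

lemma GF.gpi2 [FiniteDimensional ℝ V] (h : GF Λ L D) (p q : ℕ) : ∀ u v : V, ‖u‖ = 1 → ‖v‖ = 1 →
    df p * df q ≤ L (Λ u ^ (2 * p) * Λ v ^ (2 * q)) := by
  induction p with
  | zero => intro u v hu hv; simp [h.mom, df, hv]
  | succ p ih =>
    intro u₀ v hu₀ hv
    have hc : Continuous fun u : V => L (Λ u ^ (2 * (p + 1)) * Λ v ^ (2 * q)) := by
      have h1 := h.cont _ (2 * (p + 1)) (2 * q) 0 le_rfl
      have h2 : Continuous fun u : V => (u, v, v) := by fun_prop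
      simpa [Function.comp_def] using h1.comp h2
    obtain ⟨u, hu, hmin⟩ := (isCompact_sphere (0 : V) 1).exists_isMinOn
      ⟨u₀, by simpa using hu₀⟩ hc.continuousOn
    have hu : ‖u‖ = 1 := by simpa using hu
    have hmin : ∀ x : V, ‖x‖ = 1 → L (Λ u ^ (2 * (p + 1)) * Λ v ^ (2 * q)) ≤
        L (Λ x ^ (2 * (p + 1)) * Λ v ^ (2 * q)) := fun x hx => hmin (by simpa using hx)
    refine le_trans ?_ (hmin u₀ hu₀)
    by_cases hk : ∃ k : ℝ, v = k • u
    · obtain ⟨k, hk⟩ := hk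
      rw [coll u v hu hv k hk, ← pow_add, ← mul_add, h.mom, hu]
      simpa using df_mul_le (p + 1) q
    · set F := L (Λ u ^ (2 * (p + 1)) * Λ v ^ (2 * q)) with hF
      set a := L (Λ u ^ (2 * p) * Λ v ^ (2 * q)) with ha
      set B := L (Λ u ^ (2 * p + 1) * Λ v ^ (2 * q - 1)) with hB
      have key : (F - (2 * p + 1) * a) • u = (2 * q * B) • v := by
        refine ext_inner_left ℝ fun e => ?_
        have c1 := crit (L := L) (Λ := Λ) p (Λ v ^ (2 * q)) u hu hmin e
        have s1 := h.stein e u v 0 (2 * p + 1) (2 * q) 0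
        have e1 : 2 * p + 1 - 1 = 2 * p := by omega
        simp only [pow_zero, mul_one, CharP.cast_eq_zero, zero_mul, add_zero, e1] at s1
        have e2 : Λ u ^ (2 * p + 1) * Λ e * Λ v ^ (2 * q) =
          Λ e * (Λ u ^ (2 * p + 1) * Λ v ^ (2 * q)) := by ring
        rw [e2, s1] at c1
        have e3 : 2 * p + 2 = 2 * (p + 1) := by ring
        rw [e3, ← hF, ← ha, ← hB, real_inner_comm e u] at c1
        rw [inner_smul_right, inner_smul_right]
        push_cast at c1
        linarith
      have hB0 : 2 * q * B = 0 := by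
        by_contra hne
        apply hk
        refine ⟨(2 * q * B)⁻¹ * (F - (2 * p + 1) * a), ?_⟩
        rw [mul_smul, key, smul_smul, inv_mul_cancel₀ hne, one_smul]
      rw [hB0, zero_smul, smul_eq_zero] at key
      have hF' : F = (2 * p + 1) * a := by
        rcases key with h | h
        · linarith
        · simp [h] at hu
      rw [hF']
      have := ih u v hu hv
      simp only [df]
      rw [mul_assoc]
      gcongr

lemma GF.planar (h : GF Λ L D) (p q r : ℕ) (u v w : V) (hu : ‖u‖ = 1) (hv : ‖v‖ = 1)
    (hk : ¬ ∃ k : ℝ, v = k • u) (a b : ℝ) (hw : w = a • u + b • v) (F : ℝ)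
    (c1 : ∀ e, L (Λ u ^ (2 * p + 1) * Λ e * (Λ v ^ (2 * q + 2) * Λ w ^ (2 * r + 2))) =
      inner ℝ u e * F)
    (c2 : ∀ e, L (Λ v ^ (2 * q + 1) * Λ e * (Λ u ^ (2 * p + 2) * Λ w ^ (2 * r + 2))) =
      inner ℝ v e * F) :
    L (Λ u ^ (2 * p + 1) * Λ v ^ (2 * q + 1) * Λ w ^ (2 * r + 2)) = 0 := by
  set c : ℝ := inner ℝ u v with hc
  have huu : inner ℝ u u = (1 : ℝ) := by rw [real_inner_self_eq_norm_sq, hu, one_pow]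
  have hvv : inner ℝ v v = (1 : ℝ) := by rw [real_inner_self_eq_norm_sq, hv, one_pow]
  have hvu : inner ℝ v u = c := by rw [real_inner_comm]
  have hc1 : 1 - c ^ 2 ≠ 0 := by
    intro h0
    apply hk
    refine ⟨c, ?_⟩
    rw [← sub_eq_zero, ← inner_self_eq_zero (𝕜 := ℝ)]
    simp only [inner_sub_left, inner_sub_right, inner_smul_left, inner_smul_right, huu, hvv, hvu,
      ← hc]
    simp
    linarith
  have s1 := h.stein (u - c • v) u v w (2 * p + 2) (2 * q + 1) (2 * r + 2)
  have s2 := h.stein (v - c • u) u v w (2 * p + 1) (2 * q + 2) (2 * r + 2)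
  have i1 : inner ℝ (u - c • v) u = 1 - c ^ 2 := by
    simp only [inner_sub_left, inner_smul_left, huu, hvu]; simp; ring
  have i2 : inner ℝ (u - c • v) v = 0 := by
    simp only [inner_sub_left, inner_smul_left, hvv, ← hc]; simp
  have i3 : inner ℝ (v - c • u) v = 1 - c ^ 2 := by
    simp only [inner_sub_left, inner_smul_left, hvv, ← hc]; simp; ring
  have i4 : inner ℝ (v - c • u) u = 0 := by
    simp only [inner_sub_left, inner_smul_left, huu, hvu]; simp
  have i5 : inner ℝ (u - c • v) w = a * (1 - c ^ 2) := by
    rw [hw, inner_add_right, inner_smul_right, inner_smul_right, i1, i2]; ring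
  have i6 : inner ℝ (v - c • u) w = b * (1 - c ^ 2) := by
    rw [hw, inner_add_right, inner_smul_right, inner_smul_right, i3, i4]; ring
  have n1 : 2 * p + 2 - 1 = 2 * p + 1 := by omega
  have n2 : 2 * q + 2 - 1 = 2 * q + 1 := by omega
  have n3 : 2 * r + 2 - 1 = 2 * r + 1 := by omega
  rw [i1, i2, i5, n1, n3] at s1
  rw [i3, i4, i6, n2, n3] at s2
  set ω := L (Λ u ^ (2 * p + 1) * Λ v ^ (2 * q + 1) * Λ w ^ (2 * r + 2)) with hω
  set B1 := L (Λ u ^ (2 * p + 2) * Λ v ^ (2 * q + 1) * Λ w ^ (2 * r + 1)) with hB1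
  set B2 := L (Λ u ^ (2 * p + 1) * Λ v ^ (2 * q + 2) * Λ w ^ (2 * r + 1)) with hB2
  have hB : a * B1 + b * B2 = ω := by
    rw [hB1, hB2, hω, ← L_alg, ← L_alg, ← map_add]
    congr 1
    have : Λ w = algebraMap ℝ A a * Λ u + algebraMap ℝ A b * Λ v := by
      rw [hw, map_add, map_smul, map_smul, Algebra.smul_def, Algebra.smul_def]
    calc _ = Λ u ^ (2 * p + 1) * Λ v ^ (2 * q + 1) * Λ w ^ (2 * r + 1) *
          (algebraMap ℝ A a * Λ u + algebraMap ℝ A b * Λ v) := by ring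
      _ = _ := by rw [← this]; ring
  have t1 : L (Λ (u - c • v) * (Λ u ^ (2 * p + 2) * Λ v ^ (2 * q + 1) * Λ w ^ (2 * r + 2))) =
      c * F - c * F := by
    have x1 := c2 u
    have x2 := c2 v
    rw [hvu] at x1
    rw [hvv] at x2
    have : Λ (u - c • v) * (Λ u ^ (2 * p + 2) * Λ v ^ (2 * q + 1) * Λ w ^ (2 * r + 2)) =
      Λ v ^ (2 * q + 1) * Λ u * (Λ u ^ (2 * p + 2) * Λ w ^ (2 * r + 2)) -
      algebraMap ℝ A c * (Λ v ^ (2 * q + 1) * Λ v * (Λ u ^ (2 * p + 2) * Λ w ^ (2 * r + 2))) := by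
      rw [map_sub, map_smul, Algebra.smul_def]; ring
    rw [this, map_sub, L_alg, x1, x2]; ring
  have t2 : L (Λ (v - c • u) * (Λ u ^ (2 * p + 1) * Λ v ^ (2 * q + 2) * Λ w ^ (2 * r + 2))) =
      c * F - c * F := by
    have x1 := c1 v
    have x2 := c1 u
    rw [← hc] at x1
    rw [huu] at x2
    have : Λ (v - c • u) * (Λ u ^ (2 * p + 1) * Λ v ^ (2 * q + 2) * Λ w ^ (2 * r + 2)) =
      Λ u ^ (2 * p + 1) * Λ v * (Λ v ^ (2 * q + 2) * Λ w ^ (2 * r + 2)) -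
      algebraMap ℝ A c * (Λ u ^ (2 * p + 1) * Λ u * (Λ v ^ (2 * q + 2) * Λ w ^ (2 * r + 2))) := by
      rw [map_sub, map_smul, Algebra.smul_def]; ring
    rw [this, map_sub, L_alg, x1, x2]; ring
  rw [t1] at s1
  rw [t2] at s2
  push_cast at s1 s2
  have fin : (1 - c ^ 2) * (2 * p + 2 * q + 2 * r + 6 : ℝ) * ω = 0 := by
    have : (1 - c ^ 2) * (2 * p + 2 * q + 2 * r + 6 : ℝ) * ω =
      (2 * p + 2) * (1 - c ^ 2) * ω + (2 * q + 2) * (1 - c ^ 2) * ω +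
        (2 * r + 2) * (1 - c ^ 2) * ω := by ring
    rw [this]
    nth_rewrite 3 [← hB]
    linear_combination -s1 - s2
  have hpos : (2 * p + 2 * q + 2 * r + 6 : ℝ) ≠ 0 := by positivity
  simpa [hc1, hpos] using fin

lemma GF.gpi3 [FiniteDimensional ℝ V] (h : GF Λ L D) (p q r : ℕ) : ∀ u v w : V,
    ‖u‖ = 1 → ‖v‖ = 1 → ‖w‖ = 1 →
    df p * df q * df r ≤ L (Λ u ^ (2 * p) * Λ v ^ (2 * q) * Λ w ^ (2 * r)) := by
  induction p with
  | zero =>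
    intro u v w hu hv hw
    simpa [df] using h.gpi2 q r v w hv hw
  | succ p ih =>
    intro u₀ v₀ w₀ hu₀ hv₀ hw₀
    rcases q with _ | q
    · simpa [df] using h.gpi2 (p + 1) r u₀ w₀ hu₀ hw₀
    rcases r with _ | r
    · simpa [df] using h.gpi2 (p + 1) (q + 1) u₀ v₀ hu₀ hv₀
    have hc := h.cont _ (2 * (p + 1)) (2 * (q + 1)) (2 * (r + 1)) le_rfl
    obtain ⟨⟨u, v, w⟩, hmem, hmin⟩ := ((isCompact_sphere (0 : V) 1).prod
      ((isCompact_sphere (0 : V) 1).prod (isCompact_sphere (0 : V) 1))).exists_isMinOn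
      ⟨(u₀, v₀, w₀), by simp [hu₀, hv₀, hw₀]⟩ hc.continuousOn
    simp only [Set.mem_prod, mem_sphere_iff_norm, sub_zero] at hmem
    obtain ⟨hu, hv, hw⟩ := hmem
    have hmin : ∀ x y z : V, ‖x‖ = 1 → ‖y‖ = 1 → ‖z‖ = 1 →
        L (Λ u ^ (2 * (p + 1)) * Λ v ^ (2 * (q + 1)) * Λ w ^ (2 * (r + 1))) ≤
        L (Λ x ^ (2 * (p + 1)) * Λ y ^ (2 * (q + 1)) * Λ z ^ (2 * (r + 1))) :=
      fun x y z hx hy hz => hmin (a := (x, y, z)) (by simp [hx, hy, hz])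
    refine le_trans ?_ (hmin u₀ v₀ w₀ hu₀ hv₀ hw₀)
    have d1 := df_pos (p + 1)
    have d2 := df_pos (q + 1)
    have d3 := df_pos (r + 1)
    by_cases hkv : ∃ k : ℝ, v = k • u
    · obtain ⟨k, hk⟩ := hkv
      rw [coll u v hu hv k hk, ← pow_add, ← mul_add]
      refine le_trans ?_ (h.gpi2 _ _ u w hu hw)
      gcongr
      exact df_mul_le _ _
    by_cases hkw : ∃ k : ℝ, w = k • u
    · obtain ⟨k, hk⟩ := hkw
      rw [coll u w hu hw k hk, mul_right_comm (Λ u ^ _), ← pow_add, ← mul_add, mul_right_comm]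
      refine le_trans ?_ (h.gpi2 _ _ u v hu hv)
      gcongr
      exact df_mul_le _ _
    set F := L (Λ u ^ (2 * (p + 1)) * Λ v ^ (2 * (q + 1)) * Λ w ^ (2 * (r + 1))) with hF
    set a := L (Λ u ^ (2 * p) * Λ v ^ (2 * (q + 1)) * Λ w ^ (2 * (r + 1))) with ha
    set B := L (Λ u ^ (2 * p + 1) * Λ v ^ (2 * q + 1) * Λ w ^ (2 * r + 2)) with hB
    set B' := L (Λ u ^ (2 * p + 1) * Λ v ^ (2 * q + 2) * Λ w ^ (2 * r + 1)) with hB'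
    have c1 : ∀ e, L (Λ u ^ (2 * p + 1) * Λ e * (Λ v ^ (2 * q + 2) * Λ w ^ (2 * r + 2))) =
        inner ℝ u e * F := by
      intro e
      rw [crit p _ u hu (fun x hx => ?_) e]
      · rw [hF]; congr 2; ring
      · have := hmin x v w hx hv hw
        convert this using 2 <;> ring
    have c2 : ∀ e, L (Λ v ^ (2 * q + 1) * Λ e * (Λ u ^ (2 * p + 2) * Λ w ^ (2 * r + 2))) =
        inner ℝ v e * F := by
      intro e
      rw [crit q _ v hv (fun x hx => ?_) e]
      · rw [hF]; congr 2; ring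
      · have := hmin u x w hu hx hw
        convert this using 2 <;> ring
    have key : (F - (2 * p + 1) * a) • u = ((2 * q + 2) * B) • v + ((2 * r + 2) * B') • w := by
      refine ext_inner_left ℝ fun e => ?_
      have c := c1 e
      have s1 := h.stein e u v w (2 * p + 1) (2 * q + 2) (2 * r + 2)
      have n1 : 2 * p + 1 - 1 = 2 * p := by omega
      have n2 : 2 * q + 2 - 1 = 2 * q + 1 := by omega
      have n3 : 2 * r + 2 - 1 = 2 * r + 1 := by omega
      rw [n1, n2, n3] at s1
      have e2 : Λ u ^ (2 * p + 1) * Λ e * (Λ v ^ (2 * q + 2) * Λ w ^ (2 * r + 2)) =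
          Λ e * (Λ u ^ (2 * p + 1) * Λ v ^ (2 * q + 2) * Λ w ^ (2 * r + 2)) := by ring
      rw [e2, s1, ← hB, ← hB', real_inner_comm e u] at c
      have e3 : L (Λ u ^ (2 * p) * Λ v ^ (2 * q + 2) * Λ w ^ (2 * r + 2)) = a := by
        rw [ha]; congr 1
      rw [e3] at c
      rw [inner_add_right, inner_smul_right, inner_smul_right, inner_smul_right]
      push_cast at c
      linarith
    have hq0 : (2 * q + 2 : ℝ) ≠ 0 := by positivity
    have hr0 : (2 * r + 2 : ℝ) ≠ 0 := by positivity
    have hBB : B = 0 ∧ B' = 0 := by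
      by_cases hsp : ∃ x y : ℝ, w = x • u + y • v
      · obtain ⟨x, y, hxy⟩ := hsp
        have hB0 : B = 0 := h.planar p q r u v w hu hv hkv x y hxy F c1 c2
        refine ⟨hB0, ?_⟩
        by_contra hne
        apply hkw
        have hne' : (2 * r + 2) * B' ≠ 0 := mul_ne_zero hr0 hne
        refine ⟨((2 * r + 2) * B')⁻¹ * (F - (2 * p + 1) * a), ?_⟩
        rw [mul_smul, key, hB0, mul_zero, zero_smul, zero_add, smul_smul, inv_mul_cancel₀ hne',
          one_smul]
      · have hB0 : B' = 0 := by
          by_contra hne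
          apply hsp
          have hne' : (2 * r + 2) * B' ≠ 0 := mul_ne_zero hr0 hne
          refine ⟨((2 * r + 2) * B')⁻¹ * (F - (2 * p + 1) * a),
            -(((2 * r + 2) * B')⁻¹ * ((2 * q + 2) * B)), ?_⟩
          rw [mul_smul, key, smul_add, smul_smul, smul_smul, inv_mul_cancel₀ hne', one_smul,
            neg_smul]
          abel
        refine ⟨?_, hB0⟩
        by_contra hne
        apply hkv
        have hne' : (2 * q + 2) * B ≠ 0 := mul_ne_zero hq0 hne
        refine ⟨((2 * q + 2) * B)⁻¹ * (F - (2 * p + 1) * a), ?_⟩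
        rw [mul_smul, key, hB0, mul_zero, zero_smul, add_zero, smul_smul, inv_mul_cancel₀ hne',
          one_smul]
    rw [hBB.1, hBB.2, mul_zero, mul_zero, zero_smul, zero_smul, add_zero, smul_eq_zero] at key
    have hF' : F = (2 * p + 1) * a := by
      rcases key with h | h
      · linarith
      · simp [h] at hu
    rw [hF']
    have := ih u v w hu hv hw
    have e4 : df (p + 1) * df (q + 1) * df (r + 1) =
        (2 * p + 1) * (df p * df (q + 1) * df (r + 1)) := by
      conv_lhs => rw [show df (p + 1) = (2 * p + 1) * df p from rfl]
      ring
    rw [e4]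
    gcongr

lemma scale_unit (u : V) : ∃ x : V, ‖u‖ = ‖u‖ * 1 ∧ (u ≠ 0 → ‖x‖ = 1) ∧ u = ‖u‖ • x := by
  by_cases hu : u = 0
  · exact ⟨0, by simp, by simp [hu], by simp [hu]⟩
  · have hx' : ‖u‖ ≠ 0 := by simpa using hu
    exact ⟨‖u‖⁻¹ • u, by simp, fun _ => by rw [norm_smul]; simp [hx'],
      by rw [smul_smul, mul_inv_cancel₀ hx', one_smul]⟩

/-- The three-dimensional Gaussian product inequality. -/
theorem GF.gpi [FiniteDimensional ℝ V] (h : GF Λ L D) (p q r : ℕ) (hp : 0 < p) (hq : 0 < q)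
    (hr : 0 < r) (u v w : V) :
    (df p * (‖u‖ ^ 2) ^ p) * (df q * (‖v‖ ^ 2) ^ q) * (df r * (‖w‖ ^ 2) ^ r) ≤
      L (Λ u ^ (2 * p) * Λ v ^ (2 * q) * Λ w ^ (2 * r)) := by
  by_cases hu : u = 0
  · simp [hu, hp.ne']
  by_cases hv : v = 0
  · simp [hv, hq.ne']
  by_cases hw : w = 0
  · simp [hw, hr.ne']
  obtain ⟨x, -, hx, hux⟩ := scale_unit u
  obtain ⟨y, -, hy, hvy⟩ := scale_unit v
  obtain ⟨z, -, hz, hwz⟩ := scale_unit w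
  have := h.gpi3 p q r x y z (hx hu) (hy hv) (hz hw)
  have e : L (Λ u ^ (2 * p) * Λ v ^ (2 * q) * Λ w ^ (2 * r)) =
      (‖u‖ ^ 2) ^ p * (‖v‖ ^ 2) ^ q * (‖w‖ ^ 2) ^ r *
      L (Λ x ^ (2 * p) * Λ y ^ (2 * q) * Λ z ^ (2 * r)) := by
    conv_lhs => rw [hux, hvy, hwz]
    rw [← L_alg]
    congr 1
    simp only [map_smul, Algebra.smul_def, map_mul, map_pow, mul_pow, pow_mul]
    ring
  rw [e]
  have hpos : 0 ≤ (‖u‖ ^ 2) ^ p * (‖v‖ ^ 2) ^ q * (‖w‖ ^ 2) ^ r := by positivity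
  calc _ = (‖u‖ ^ 2) ^ p * (‖v‖ ^ 2) ^ q * (‖w‖ ^ 2) ^ r * (df p * df q * df r) := by ring
    _ ≤ _ := by gcongr

end abstract_part

open ProbabilityTheory

lemma gauss_integrable_iff (f : ℝ → ℝ) :
    Integrable f (gaussianReal 0 1) ↔ Integrable (fun x => f x * Real.exp (-(1/2) * x ^ 2)) := by
  rw [gaussianReal_of_var_ne_zero _ one_ne_zero,
    integrable_withDensity_iff (measurable_gaussianPDF _ _) (ae_of_all _ fun _ => gaussianPDF_lt_top)]
  have hc : (√(2 * Real.pi))⁻¹ ≠ 0 := by positivity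
  have : (fun x => f x * (gaussianPDF 0 1 x).toReal) =
      fun x => (√(2 * Real.pi))⁻¹ * (f x * Real.exp (-(1/2) * x ^ 2)) := by
    funext x
    rw [toReal_gaussianPDF, gaussianPDFReal]
    simp only [NNReal.coe_one, mul_one, sub_zero]
    have : -x ^ 2 / 2 = -(1/2) * x ^ 2 := by ring
    rw [this]; ring
  rw [this]
  exact integrable_const_mul_iff (isUnit_iff_ne_zero.2 hc) _

lemma gauss_integral (f : ℝ → ℝ) :
    ∫ x, f x ∂(gaussianReal 0 1) =
      (√(2 * Real.pi))⁻¹ * ∫ x, f x * Real.exp (-(1/2) * x ^ 2) := by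
  rw [integral_gaussianReal_eq_integral_smul one_ne_zero, ← integral_const_mul]
  congr 1
  funext x
  rw [gaussianPDFReal]
  simp only [NNReal.coe_one, mul_one, sub_zero, smul_eq_mul]
  have : -x ^ 2 / 2 = -(1/2) * x ^ 2 := by ring
  rw [this]; ring

lemma int_abs_rpow {s : ℝ} (hs : -1 < s) :
    Integrable (fun x : ℝ => |x| ^ s) (gaussianReal 0 1) := by
  rw [gauss_integrable_iff]
  have h1 : IntegrableOn (fun x : ℝ => |x| ^ s * Real.exp (-(1/2) * x ^ 2)) (Set.Ioi 0) := by
    refine (integrableOn_rpow_mul_exp_neg_mul_sq (b := 1/2) (by norm_num) hs).congr_fun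
      (fun x hx => ?_) measurableSet_Ioi
    simp only
    rw [abs_of_pos hx]
  rw [← integrableOn_univ, ← Set.Iio_union_Ici (a := (0 : ℝ)), integrableOn_union,
    integrableOn_Ici_iff_integrableOn_Ioi]
  refine ⟨?_, h1⟩
  rw [← (Measure.measurePreserving_neg (volume : Measure ℝ)).integrableOn_comp_preimage
      (Homeomorph.neg ℝ).measurableEmbedding]
  simpa [Function.comp_def] using h1

lemma int_weight {s : ℝ} (hs : s < 1) (k : ℕ) :
    Integrable (fun x : ℝ => |x| ^ (-s) * x ^ k) (gaussianReal 0 1) := by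
  have h1 := int_abs_rpow (s := -s + k) (by have : (0:ℝ) ≤ k := Nat.cast_nonneg k; linarith)
  refine h1.mono' (by fun_prop) ?_
  have : NullSingletonClass (gaussianReal 0 1) := nullSingletonClass_gaussianReal one_ne_zero
  have h0 : ∀ᵐ x ∂(gaussianReal 0 1), x ≠ (0 : ℝ) := by
    rw [ae_iff]; simp
  filter_upwards [h0] with x hx
  have hx' : 0 < |x| := abs_pos.2 hx
  rw [Real.rpow_add hx', Real.rpow_natCast, norm_mul, Real.norm_eq_abs, Real.norm_eq_abs, abs_pow,
    abs_of_nonneg (Real.rpow_nonneg (abs_nonneg x) _)]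

lemma int_pow (k : ℕ) : Integrable (fun x : ℝ => x ^ k) (gaussianReal 0 1) := by
  simpa using int_weight (s := 0) (by norm_num) k

lemma int_exp (t : ℝ) (ht : 0 ≤ t) (k : ℕ) :
    Integrable (fun x : ℝ => Real.exp (-t * x ^ 2) * x ^ k) (gaussianReal 0 1) := by
  refine (int_pow k).norm.mono' (by fun_prop) (ae_of_all _ fun x => ?_)
  rw [norm_mul, Real.norm_eq_abs, abs_of_pos (Real.exp_pos _)]
  have : Real.exp (-t * x ^ 2) ≤ 1 := Real.exp_le_one_iff.2 (by nlinarith [sq_nonneg x])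
  nlinarith [norm_nonneg (x ^ k)]

lemma mom_rec (k : ℕ) : ∫ x : ℝ, x ^ (k + 2) ∂(gaussianReal 0 1) =
    (k + 1) * ∫ x : ℝ, x ^ k ∂(gaussianReal 0 1) := by
  have hi : ∀ j : ℕ, Integrable (fun x : ℝ => x ^ j * Real.exp (-(1/2) * x ^ 2)) := fun j =>
    (gauss_integrable_iff _).1 (int_pow j)
  have h := integral_eq_zero_of_hasDerivAt_of_integrable
    (f := fun x : ℝ => x ^ (k + 1) * Real.exp (-(1/2) * x ^ 2))
    (f' := fun x : ℝ => (k + 1) * (x ^ k * Real.exp (-(1/2) * x ^ 2)) -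
      x ^ (k + 2) * Real.exp (-(1/2) * x ^ 2)) (fun x => by
      have a1 := hasDerivAt_pow (k + 1) x
      have a2 := ((hasDerivAt_pow 2 x).const_mul (-(1/2) : ℝ)).exp
      refine (a1.mul a2).congr_deriv ?_
      simp only [Nat.add_sub_cancel]
      push_cast
      ring) (((hi k).const_mul _).sub (hi (k + 2))) (hi (k + 1))
  rw [integral_sub ((hi k).const_mul _) (hi (k + 2)), integral_const_mul] at h
  rw [gauss_integral, gauss_integral]
  linear_combination -(√(2 * Real.pi))⁻¹ * h

lemma mom_tilt (t : ℝ) (ht : 0 ≤ t) (f : ℝ → ℝ) :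
    ∫ x : ℝ, Real.exp (-t * x ^ 2) * f x ∂(gaussianReal 0 1) =
     (√(1 + 2 * t))⁻¹ * ∫ x : ℝ, f ((√(1 + 2 * t))⁻¹ * x) ∂(gaussianReal 0 1) := by
  rw [gauss_integral, gauss_integral]
  set s := (√(1 + 2 * t))⁻¹ with hs
  have hpos : 0 < s := by positivity
  have hs2 : s ^ 2 * (1 + 2 * t) = 1 := by
    rw [hs, inv_pow, Real.sq_sqrt (by positivity)]; field_simp
  have h := Measure.integral_comp_mul_left
    (fun y => Real.exp (-t * y ^ 2) * f y * Real.exp (-(1/2) * y ^ 2)) s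
  rw [abs_of_pos (inv_pos.2 hpos), smul_eq_mul] at h
  have e : (fun x => Real.exp (-t * (s * x) ^ 2) * f (s * x) * Real.exp (-(1/2) * (s * x) ^ 2)) =
      fun x => f (s * x) * Real.exp (-(1/2) * x ^ 2) := by
    funext x
    have : -(1/2) * x ^ 2 = -t * (s * x) ^ 2 + -(1/2) * (s * x) ^ 2 := by
      linear_combination (1/2 * x ^ 2) * hs2
    rw [this, Real.exp_add]; ring
  rw [e] at h
  rw [h]
  field_simp

/-- standard Gaussian on `ℝ⁴` -/
noncomputable def gm : Measure (Fin 4 → ℝ) := Measure.pi fun _ => gaussianReal 0 1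

instance : IsProbabilityMeasure gm := by unfold gm; infer_instance

abbrev Pol := MvPolynomial (Fin 4) ℝ

lemma weight_mono (w : ℝ → ℝ) (s : Fin 4 →₀ ℕ) (a : ℝ) (g : Fin 4 → ℝ) :
    w (g 0) * MvPolynomial.eval g (MvPolynomial.monomial s a) =
      a * ∏ i, ((if i = 0 then w (g i) else 1) * g i ^ s i) := by
  rw [MvPolynomial.eval_monomial, Finset.prod_mul_distrib,
    Finsupp.prod_fintype _ _ (fun i => by simp)]
  simp
  ring

lemma weight_int (w : ℝ → ℝ) (hw : ∀ k : ℕ, Integrable (fun x => w x * x ^ k) (gaussianReal 0 1))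
    (P : Pol) : Integrable (fun g => w (g 0) * MvPolynomial.eval g P) gm := by
  induction P using MvPolynomial.induction_on' with
  | monomial s a =>
    simp only [weight_mono]
    refine Integrable.const_mul ?_ a
    refine Integrable.fintype_prod (f := fun i x => (if i = 0 then w x else 1) * x ^ s i)
      (fun i => ?_)
    by_cases hi : i = 0
    · simpa [hi] using hw (s 0)
    · simpa [hi] using int_pow (s i)
  | add p q hp hq =>
    simp only [map_add, mul_add]
    exact hp.add hq

lemma eval_int (P : Pol) : Integrable (fun g => MvPolynomial.eval g P) gm := by
  simpa using weight_int (fun _ => 1) (by simpa using int_pow) P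

lemma weight_mono_int (w : ℝ → ℝ) (s : Fin 4 →₀ ℕ) (a : ℝ) :
    ∫ g, w (g 0) * MvPolynomial.eval g (MvPolynomial.monomial s a) ∂gm =
      a * ∏ i, ∫ x, ((if i = 0 then w x else 1) * x ^ s i) ∂(gaussianReal 0 1) := by
  simp only [weight_mono]
  rw [integral_const_mul]
  congr 1
  exact integral_fintype_prod_eq_prod (fun i x => (if i = 0 then w x else 1) * x ^ s i)

noncomputable def Lg : Pol →ₗ[ℝ] ℝ where
  toFun P := ∫ g, MvPolynomial.eval g P ∂gm
  map_add' P Q := by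
    simp only [map_add]; exact integral_add (eval_int P) (eval_int Q)
  map_smul' c P := by
    simp only [MvPolynomial.smul_eval, RingHom.id_apply, smul_eq_mul]; exact integral_const_mul _ _

lemma Lg_apply (P : Pol) : Lg P = ∫ g, MvPolynomial.eval g P ∂gm := rfl

lemma Lg_mono (s : Fin 4 →₀ ℕ) (a : ℝ) : Lg (MvPolynomial.monomial s a) =
    a * ∏ i, ∫ x, x ^ s i ∂(gaussianReal 0 1) := by
  simpa [Lg_apply] using weight_mono_int (fun _ => 1) s a

lemma tilt (t : ℝ) (ht : 0 ≤ t) (P : Pol) :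
    ∫ g, Real.exp (-t * g 0 ^ 2) * MvPolynomial.eval g P ∂gm =
      (√(1 + 2 * t))⁻¹ *
        Lg (MvPolynomial.aeval (fun i => (if i = 0 then (√(1 + 2 * t))⁻¹ else 1) •
          (MvPolynomial.X i : Pol)) P) := by
  induction P using MvPolynomial.induction_on' with
  | monomial s a =>
    set c := (√(1 + 2 * t))⁻¹ with hc
    rw [weight_mono_int (fun x => Real.exp (-t * x ^ 2))]
    have e : MvPolynomial.aeval (fun i => (if i = 0 then c else 1) •
          (MvPolynomial.X i : Pol)) (MvPolynomial.monomial s a) =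
        MvPolynomial.monomial s (a * c ^ s 0) := by
      rw [MvPolynomial.aeval_monomial, Finsupp.prod_fintype _ _ (fun i => by simp)]
      simp only [smul_pow]
      rw [MvPolynomial.monomial_eq, Finsupp.prod_fintype _ _ (fun i => by simp)]
      simp [Fin.prod_univ_four, MvPolynomial.smul_eq_C_mul]
      ring
    rw [e, Lg_mono]
    simp only [Fin.prod_univ_four, if_true, Fin.isValue]
    rw [mom_tilt t ht]
    simp only [mul_pow, integral_const_mul, ← hc]
    simp
    ring
  | add p q hp hq =>
    simp only [map_add, mul_add]
    rw [integral_add, hp, hq]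
    · exact weight_int (fun x => Real.exp (-t * x ^ 2)) (int_exp t ht) p
    · exact weight_int (fun x => Real.exp (-t * x ^ 2)) (int_exp t ht) q

lemma stein_mono (i : Fin 4) (P : Pol) :
    Lg (MvPolynomial.X i * P) = Lg (MvPolynomial.pderiv i P) := by
  induction P using MvPolynomial.induction_on' with
  | monomial s a =>
    rw [MvPolynomial.pderiv_monomial, mul_comm, ← pow_one (MvPolynomial.X i),
      ← MvPolynomial.monomial_add_single, Lg_mono, Lg_mono, mul_assoc]
    congr 1
    rw [← Finset.mul_prod_erase _ _ (Finset.mem_univ i),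
      ← Finset.mul_prod_erase _ _ (Finset.mem_univ i), ← mul_assoc]
    congr 1
    · simp only [Finsupp.add_apply, Finsupp.single_eq_same, Finsupp.tsub_apply]
      rcases s i with _ | _ | k
      · simp [integral_id_gaussianReal]
      · have := mom_rec 0
        simpa using this
      · have := mom_rec (k + 1)
        simp only [Nat.add_sub_cancel]
        rw [this]; push_cast; ring
    · refine Finset.prod_congr rfl fun j hj => ?_
      have hj : j ≠ i := by simpa using hj
      simp [hj, Finsupp.single_apply, hj.symm]
  | add p q hp hq => simp only [map_add, mul_add, hp, hq]

abbrev E4 := EuclideanSpace ℝ (Fin 4)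

noncomputable def Lam : E4 →ₗ[ℝ] Pol where
  toFun u := ∑ i, u i • MvPolynomial.X i
  map_add' u v := by simp [add_smul, Finset.sum_add_distrib]
  map_smul' c u := by simp [mul_smul, Finset.smul_sum]

lemma Lam_apply (u : E4) : Lam u = ∑ i, u i • (MvPolynomial.X i : Pol) := rfl

lemma eval_Lam (u : E4) (g : Fin 4 → ℝ) : MvPolynomial.eval g (Lam u) = ∑ i, u i * g i := by
  simp [Lam_apply]

noncomputable def Dg (e : E4) : Derivation ℝ Pol Pol := ∑ i, e i • MvPolynomial.pderiv i

lemma Dg_apply (e : E4) (P : Pol) : Dg e P = ∑ i, e i • MvPolynomial.pderiv i P := by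
  simp [Dg, Fin.sum_univ_four]

lemma Lg_one : Lg 1 = 1 := by simp [Lg_apply]

lemma gf_dl (e u : E4) : Dg e (Lam u) = algebraMap ℝ Pol (inner ℝ e u) := by
  rw [Dg_apply, Lam_apply, PiLp.inner_apply, map_sum]
  refine Finset.sum_congr rfl fun i _ => ?_
  simp [MvPolynomial.pderiv_X, Pi.single_apply, MvPolynomial.smul_eq_C_mul,
    MvPolynomial.algebraMap_eq, mul_comm]

lemma gf_st (e : E4) (P : Pol) : Lg (Lam e * P) = Lg (Dg e P) := by
  rw [Dg_apply, Lam_apply, Finset.sum_mul, map_sum, map_sum]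
  refine Finset.sum_congr rfl fun i _ => ?_
  rw [smul_mul_assoc, map_smul, map_smul, stein_mono]


noncomputable def PP (m : Fin 3 → ℕ) (a : Fin 3 → E4) : Pol := ∏ i, Lam (a i) ^ (2 * m i)

noncomputable def C0 (m : Fin 3 → ℕ) (a : Fin 3 → E4) : ℝ :=
  ∏ i, df (m i) * (‖a i‖ ^ 2 - (a i 0) ^ 2) ^ m i

lemma norm_sub (a : E4) : ‖a‖ ^ 2 - (a 0) ^ 2 = (a 1) ^ 2 + (a 2) ^ 2 + (a 3) ^ 2 := by
  rw [EuclideanSpace.real_norm_sq_eq, Fin.sum_univ_four]; ring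

lemma C0_nonneg (m : Fin 3 → ℕ) (a : Fin 3 → E4) : 0 ≤ C0 m a := by
  refine Finset.prod_nonneg fun i _ => ?_
  rw [norm_sub]
  have := df_pos (m i)
  positivity

lemma eval_PP (m : Fin 3 → ℕ) (a : Fin 3 → E4) (g : Fin 4 → ℝ) :
    MvPolynomial.eval g (PP m a) = ∏ i, (∑ j, a i j * g j) ^ (2 * m i) := by
  simp [PP, eval_Lam]

lemma eval_PP_nonneg (m : Fin 3 → ℕ) (a : Fin 3 → E4) (g : Fin 4 → ℝ) :
    0 ≤ MvPolynomial.eval g (PP m a) := by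
  rw [eval_PP]
  exact Finset.prod_nonneg fun i _ => (even_two_mul _).pow_nonneg _

lemma tilt_ge (t : ℝ) (ht : 0 ≤ t) (m : Fin 3 → ℕ) (hm : ∀ i, 0 < m i) (a : Fin 3 → E4) :
    C0 m a * ∫ g, Real.exp (-t * g 0 ^ 2) ∂gm ≤
      ∫ g, Real.exp (-t * g 0 ^ 2) * MvPolynomial.eval g (PP m a) ∂gm := by
  have h1 := tilt t ht 1
  simp only [map_one, mul_one, Lg_one] at h1
  rw [h1, tilt t ht, mul_comm]
  set s : ℝ := (√(1 + 2 * t))⁻¹ with hs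
  have hs0 : 0 ≤ s := by positivity
  refine mul_le_mul_of_nonneg_left ?_ hs0
  let b : Fin 3 → E4 := fun i => WithLp.toLp 2 (fun j => (if j = 0 then s else 1) * a i j)
  have hb : ∀ i, MvPolynomial.aeval (fun i => (if i = 0 then s else 1) •
      (MvPolynomial.X i : Pol)) (Lam (a i)) = Lam (b i) := by
    intro i
    simp only [Lam_apply, map_sum, map_smul, MvPolynomial.aeval_X, b, smul_smul]
    refine Finset.sum_congr rfl fun j _ => ?_
    rw [mul_comm]
  have : MvPolynomial.aeval (fun i => (if i = 0 then s else 1) •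
      (MvPolynomial.X i : Pol)) (PP m a) = PP m b := by
    simp only [PP, map_prod, map_pow, hb]
  rw [this]
  have hg : GF Lam Lg Dg := ⟨Lg_one, gf_dl, gf_st⟩
  have := hg.gpi (m 0) (m 1) (m 2) (hm 0) (hm 1) (hm 2) (b 0) (b 1) (b 2)
  have h3 : Lam (b 0) ^ (2 * m 0) * Lam (b 1) ^ (2 * m 1) * Lam (b 2) ^ (2 * m 2) = PP m b := by
    rw [PP, Fin.prod_univ_three]
  rw [h3] at this
  refine le_trans ?_ this
  have h4 : (df (m 0) * (‖b 0‖ ^ 2) ^ m 0) * (df (m 1) * (‖b 1‖ ^ 2) ^ m 1) *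
      (df (m 2) * (‖b 2‖ ^ 2) ^ m 2) = ∏ i, df (m i) * (‖b i‖ ^ 2) ^ m i := by
    rw [Fin.prod_univ_three]
  rw [h4, C0]
  refine Finset.prod_le_prod (fun i _ => ?_) (fun i _ => ?_)
  · rw [norm_sub]
    have := df_pos (m i)
    positivity
  · have := df_pos (m i)
    refine mul_le_mul_of_nonneg_left ?_ this.le
    refine pow_le_pow_left₀ (by rw [norm_sub]; positivity) ?_ _
    have h5 := norm_sub (b i)
    rw [norm_sub]
    simp only [b, if_true, one_mul, Fin.isValue, one_ne_zero, if_false] at h5 ⊢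
    simp only [show (2 : Fin 4) ≠ 0 by decide, show (3 : Fin 4) ≠ 0 by decide, if_false, one_mul] at h5
    nlinarith [sq_nonneg (s * a i 0)]

lemma lint_rep {α : ℝ} (hα : 0 < α) (x : ℝ) (hx : x ≠ 0) :
    ∫⁻ t in Set.Ioi (0:ℝ), ENNReal.ofReal (t ^ (α / 2 - 1)) * ENNReal.ofReal (Real.exp (-t * x ^ 2)) =
      ENNReal.ofReal (|x| ^ (-α)) * ENNReal.ofReal (Real.Gamma (α / 2)) := by
  have hx2 : 0 < x ^ 2 := by positivity
  have hG := Real.Gamma_pos_of_pos (half_pos hα)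
  have h := Real.integral_rpow_mul_exp_neg_mul_Ioi (half_pos hα) hx2
  have e1 : (1 / x ^ 2) ^ (α / 2) = |x| ^ (-α) := by
    rw [← sq_abs, one_div, Real.inv_rpow (by positivity), ← Real.rpow_natCast, ← Real.rpow_mul (abs_nonneg _),
      Real.rpow_neg (abs_nonneg _)]
    congr 2; push_cast; ring
  rw [e1] at h
  have hintg : Integrable (fun t : ℝ => t ^ (α / 2 - 1) * Real.exp (-(x ^ 2 * t)))
      (volume.restrict (Set.Ioi 0)) := by
    refine Integrable.of_integral_ne_zero ?_
    rw [h]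
    have : 0 < |x| ^ (-α) := Real.rpow_pos_of_pos (abs_pos.2 hx) _
    positivity
  rw [← ENNReal.ofReal_mul (by positivity), ← h, ofReal_integral_eq_lintegral_ofReal hintg]
  · refine setLIntegral_congr_fun measurableSet_Ioi fun t ht => ?_
    have ht' : (0:ℝ) < t := ht
    rw [← ENNReal.ofReal_mul (by positivity)]
    congr 3; ring
  · filter_upwards [self_mem_ae_restrict measurableSet_Ioi] with t ht
    have ht' : (0:ℝ) < t := ht
    simp only [Pi.zero_apply]
    positivity

lemma gm_ne : ∀ᵐ g ∂gm, g 0 ≠ 0 := by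
  have h : MeasurePreserving (Function.eval (0 : Fin 4)) gm (gaussianReal 0 1) :=
    measurePreserving_eval (fun _ : Fin 4 => gaussianReal 0 1) 0
  have h2 : ∀ᵐ x ∂(gaussianReal 0 1), x ≠ 0 := by
    have := nullSingletonClass_gaussianReal (μ := 0) (v := 1) one_ne_zero
    simp [ae_iff]
  exact h.quasiMeasurePreserving.ae h2

lemma lint_swap {α : ℝ} (hα : 0 < α) (h : (Fin 4 → ℝ) → ℝ) (hh : Measurable h) :
    (∫⁻ g, ENNReal.ofReal (|g 0| ^ (-α)) * ENNReal.ofReal (h g) ∂gm) *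
        ENNReal.ofReal (Real.Gamma (α / 2)) =
      ∫⁻ t in Set.Ioi (0:ℝ), ENNReal.ofReal (t ^ (α / 2 - 1)) *
        ∫⁻ g, ENNReal.ofReal (Real.exp (-t * g 0 ^ 2)) * ENNReal.ofReal (h g) ∂gm := by
  have m1 : Measurable fun g : Fin 4 → ℝ => g 0 := measurable_pi_apply 0
  rw [← lintegral_mul_const _ (by fun_prop)]
  calc _ = ∫⁻ g, (∫⁻ t in Set.Ioi (0:ℝ), ENNReal.ofReal (t ^ (α / 2 - 1)) *
        (ENNReal.ofReal (Real.exp (-t * g 0 ^ 2)) * ENNReal.ofReal (h g))) ∂gm := by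
        refine lintegral_congr_ae ?_
        filter_upwards [gm_ne] with g hg
        simp_rw [← mul_assoc]
        rw [lintegral_mul_const _ (by fun_prop), lint_rep hα _ hg]
        ring
    _ = ∫⁻ t in Set.Ioi (0:ℝ), ∫⁻ g, ENNReal.ofReal (t ^ (α / 2 - 1)) *
        (ENNReal.ofReal (Real.exp (-t * g 0 ^ 2)) * ENNReal.ofReal (h g)) ∂gm := by
        rw [lintegral_lintegral_swap]
        apply Measurable.aemeasurable
        unfold Function.uncurry
        fun_prop
    _ = _ := by
        refine lintegral_congr fun t => ?_
        rw [lintegral_const_mul _ (by fun_prop)]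

lemma eval_meas (P : Pol) : Measurable fun g : Fin 4 → ℝ => MvPolynomial.eval g P :=
  (MvPolynomial.continuous_eval P).measurable

lemma gm_ineq {α : ℝ} (h0 : 0 < α) (h1 : α < 1) (m : Fin 3 → ℕ) (hm : ∀ i, 0 < m i)
    (a : Fin 3 → E4) :
    C0 m a * ∫ g, |g 0| ^ (-α) ∂gm ≤ ∫ g, |g 0| ^ (-α) * MvPolynomial.eval g (PP m a) ∂gm := by
  have i1 : Integrable (fun g : Fin 4 → ℝ => |g 0| ^ (-α) * MvPolynomial.eval g (PP m a)) gm :=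
    weight_int (fun x => |x| ^ (-α)) (int_weight h1) _
  have i2 : Integrable (fun g : Fin 4 → ℝ => |g 0| ^ (-α)) gm := by
    simpa using weight_int (fun x => |x| ^ (-α)) (int_weight h1) 1
  have hC := C0_nonneg m a
  have m1 : Measurable fun g : Fin 4 → ℝ => g 0 := measurable_pi_apply 0
  have hnn := eval_PP_nonneg m a
  have key : ENNReal.ofReal (C0 m a) * (∫⁻ g, ENNReal.ofReal (|g 0| ^ (-α)) ∂gm) ≤
      ∫⁻ g, ENNReal.ofReal (|g 0| ^ (-α)) * ENNReal.ofReal (MvPolynomial.eval g (PP m a)) ∂gm := by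
    have hG := Real.Gamma_pos_of_pos (half_pos h0)
    have hG0 : ENNReal.ofReal (Real.Gamma (α / 2)) ≠ 0 := by
      simpa using hG
    rw [← ENNReal.mul_le_mul_iff_left hG0 ENNReal.ofReal_ne_top, lint_swap h0 _ (eval_meas _), mul_assoc]
    have := lint_swap h0 (fun _ => 1) measurable_const
    simp only [ENNReal.ofReal_one, mul_one] at this
    rw [this, ← lintegral_const_mul' _ _ ENNReal.ofReal_ne_top]
    refine setLIntegral_mono' measurableSet_Ioi fun t ht => ?_
    have ht' : (0:ℝ) < t := ht
    rw [mul_left_comm]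
    gcongr
    have j1 : Integrable (fun g : Fin 4 → ℝ => Real.exp (-t * g 0 ^ 2) *
        MvPolynomial.eval g (PP m a)) gm :=
      weight_int (fun x => Real.exp (-t * x ^ 2)) (int_exp t ht'.le) _
    have j2 : Integrable (fun g : Fin 4 → ℝ => Real.exp (-t * g 0 ^ 2)) gm := by
      simpa using weight_int (fun x => Real.exp (-t * x ^ 2)) (int_exp t ht'.le) 1
    simp_rw [← ENNReal.ofReal_mul (Real.exp_nonneg _)]
    rw [← ofReal_integral_eq_lintegral_ofReal j2 (ae_of_all _ fun g => Real.exp_nonneg _),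
      ← ofReal_integral_eq_lintegral_ofReal j1
        (ae_of_all _ fun g => mul_nonneg (Real.exp_nonneg _) (hnn g)),
      ← ENNReal.ofReal_mul hC]
    exact ENNReal.ofReal_le_ofReal (tilt_ge t ht'.le m hm a)
  have nn : ∀ g : Fin 4 → ℝ, 0 ≤ |g 0| ^ (-α) := fun g => by positivity
  simp_rw [← ENNReal.ofReal_mul (nn _)] at key
  rw [← ofReal_integral_eq_lintegral_ofReal i2 (ae_of_all _ nn),
      ← ofReal_integral_eq_lintegral_ofReal i1 (ae_of_all _ fun g => mul_nonneg (nn g) (hnn g)),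
      ← ENNReal.ofReal_mul hC] at key
  exact (ENNReal.ofReal_le_ofReal_iff (integral_nonneg fun g => mul_nonneg (nn g) (hnn g))).1 key



lemma exists_factor (M : Matrix (Fin 3) (Fin 3) ℝ) (hM : M.PosSemidef) :
    ∃ B : Matrix (Fin 3) (Fin 3) ℝ, M = Bᵀ * B := by
  open scoped MatrixOrder in
  obtain ⟨B, hB⟩ := CStarAlgebra.nonneg_iff_eq_star_mul_self.mp hM.nonneg
  exact ⟨B, by simpa [Matrix.star_eq_conjTranspose] using hB⟩

lemma exists_vectors (S : Matrix (Fin 4) (Fin 4) ℝ) (hS : S.IsSymm)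
    (hpsd : ∀ u : Fin 4 → ℝ, 0 ≤ u ⬝ᵥ S *ᵥ u) (h0 : 0 < S 0 0) :
    ∃ a : Fin 4 → E4, (∀ i j, inner ℝ (a i) (a j) = S i j) ∧
      a 0 = EuclideanSpace.single 0 (√(S 0 0)) := by
  let M : Matrix (Fin 3) (Fin 3) ℝ := Matrix.of fun i j =>
    S i.succ j.succ - S 0 i.succ * S 0 j.succ / S 0 0
  have hs : ∀ i j, S i j = S j i := fun i j => (hS.apply i j).symm
  have hM : M.PosSemidef := by
    refine .of_dotProduct_mulVec_nonneg ?_ ?_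
    · ext i j
      simp only [M, conjTranspose_apply, of_apply, star_trivial]
      rw [hs j.succ i.succ, mul_comm]
    · intro v
      have := hpsd ![-(∑ i, S 0 i.succ * v i) / S 0 0, v 0, v 1, v 2]
      refine this.trans_eq ?_
      simp [dotProduct, mulVec, Fin.sum_univ_succ, M]
      rw [hs 1 0, hs 2 0, hs 3 0]
      field_simp
      ring
  obtain ⟨B, hB⟩ := exists_factor M hM
  have hB' : ∀ i j, ∑ k, B k i * B k j = S i.succ j.succ - S 0 i.succ * S 0 j.succ / S 0 0 := by
    intro i j
    have : M i j = (Bᵀ * B) i j := by rw [← hB]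
    simpa [Matrix.mul_apply, M] using this.symm
  have hq : √(S 0 0) * √(S 0 0) = S 0 0 := Real.mul_self_sqrt h0.le
  have hq0 : √(S 0 0) ≠ 0 := by positivity
  refine ⟨Fin.cons (EuclideanSpace.single 0 (√(S 0 0)))
    (fun i => WithLp.toLp 2 (Fin.cons (S 0 i.succ / √(S 0 0)) (fun k => B k i))), ?_, rfl⟩
  intro i j
  rw [PiLp.inner_apply, Fin.sum_univ_succ]
  refine Fin.cases ?_ (fun i => ?_) i <;> refine Fin.cases ?_ (fun j => ?_) j
  · simp [h0.le]
  · simp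
    field_simp
  · simp
    rw [hs i.succ 0]
    field_simp
  · have := hB' i j
    simp only [Fin.cons_succ, Fin.cons_zero, RCLike.inner_apply, conj_trivial]
    rw [show ∑ k, B k j * B k i = ∑ k, B k i * B k j from Finset.sum_congr rfl fun _ _ => mul_comm _ _, this,
      div_mul_div_comm, hq]
    ring

lemma psd_of {Ω : Type*} [MeasurableSpace Ω] (μ : Measure Ω) [IsProbabilityMeasure μ]
    (X : Ω → (Fin 4 → ℝ))
    (S : Matrix (Fin 4) (Fin 4) ℝ)
    (hGauss : ∀ u : Fin 4 → ℝ,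
      ∫ ω, Complex.exp (Complex.I * ((u ⬝ᵥ X ω : ℝ) : ℂ)) ∂μ =
        Complex.exp (-(((u ⬝ᵥ S *ᵥ u : ℝ) : ℂ)) / 2)) (u : Fin 4 → ℝ) :
    0 ≤ u ⬝ᵥ S *ᵥ u := by
  have h := norm_integral_le_integral_norm (μ := μ)
    (fun ω => Complex.exp (Complex.I * ((u ⬝ᵥ X ω : ℝ) : ℂ)))
  rw [hGauss u] at h
  simp_rw [mul_comm Complex.I, Complex.norm_exp_ofReal_mul_I] at h
  rw [Complex.norm_exp] at h
  simp only [integral_const, smul_eq_mul, mul_one, probReal_univ] at h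
  have h2 := Real.exp_le_one_iff.1 h
  have : (-((u ⬝ᵥ S *ᵥ u : ℝ) : ℂ) / 2).re = -(u ⬝ᵥ S *ᵥ u) / 2 := by
    rw [← Complex.ofReal_neg, show (2:ℂ) = ((2:ℝ):ℂ) by norm_num, ← Complex.ofReal_div, Complex.ofReal_re]
  rw [this] at h2
  linarith

lemma gm_char (v : E4) : ∫ g, Complex.exp (((∑ j, v j * g j : ℝ) : ℂ) * Complex.I) ∂gm =
    Complex.exp (-((‖v‖ ^ 2 : ℝ) : ℂ) / 2) := by
  have h := charFun_stdGaussian (E := E4) v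
  rw [← map_pi_eq_stdGaussian, charFun_apply, integral_map (by fun_prop)
    (Measurable.aestronglyMeasurable (by fun_prop))] at h
  rw [Complex.ofReal_pow, ← h]
  simp only [PiLp.inner_apply, RCLike.inner_apply, conj_trivial]
  rfl

lemma law {Ω : Type*} [MeasurableSpace Ω] (μ : Measure Ω) [IsProbabilityMeasure μ]
    (X : Ω → (Fin 4 → ℝ)) (hXm : Measurable X)
    (S : Matrix (Fin 4) (Fin 4) ℝ)
    (hGauss : ∀ u : Fin 4 → ℝ,
      ∫ ω, Complex.exp (Complex.I * ((u ⬝ᵥ X ω : ℝ) : ℂ)) ∂μ =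
        Complex.exp (-(((u ⬝ᵥ S *ᵥ u : ℝ) : ℂ)) / 2))
    (a : Fin 4 → E4) (ha : ∀ i j, inner ℝ (a i) (a j) = S i j) :
    μ.map X = gm.map (fun g i => ∑ j, a i j * g j) := by
  have hm2 : Measurable (fun (g : Fin 4 → ℝ) (i : Fin 4) => ∑ j, a i j * g j) := by fun_prop
  have hl : Measurable (WithLp.toLp 2 : (Fin 4 → ℝ) → E4) := by fun_prop
  have hlX : Measurable (WithLp.ofLp : E4 → (Fin 4 → ℝ)) := by fun_prop
  suffices h : (μ.map X).map (WithLp.toLp 2 : (Fin 4 → ℝ) → E4) =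
      (gm.map (fun g i => ∑ j, a i j * g j)).map (WithLp.toLp 2 : (Fin 4 → ℝ) → E4) by
    have h2 := congrArg (Measure.map (WithLp.ofLp : E4 → (Fin 4 → ℝ))) h
    rw [Measure.map_map hlX hl, Measure.map_map hlX hl] at h2
    have e : (WithLp.ofLp : E4 → (Fin 4 → ℝ)) ∘ (WithLp.toLp 2) = id := rfl
    simpa [e] using h2
  rw [Measure.map_map hl hXm, Measure.map_map hl hm2]
  have := Measure.isProbabilityMeasure_map (μ := μ) (hl.comp hXm).aemeasurable
  have := Measure.isProbabilityMeasure_map (μ := gm) (hl.comp hm2).aemeasurable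
  apply Measure.ext_of_charFun
  ext u
  rw [charFun_apply, charFun_apply, integral_map (hl.comp hXm).aemeasurable
    (Measurable.aestronglyMeasurable (by fun_prop)), integral_map (hl.comp hm2).aemeasurable
    (Measurable.aestronglyMeasurable (by fun_prop))]
  have e1 := hGauss u.ofLp
  have e2 := gm_char (∑ i, u i • a i)
  have e3 : ‖∑ i, u i • a i‖ ^ 2 = u.ofLp ⬝ᵥ S *ᵥ u.ofLp := by
    rw [← real_inner_self_eq_norm_sq, sum_inner]
    simp_rw [inner_sum, real_inner_smul_left, real_inner_smul_right, ha]
    simp only [dotProduct, mulVec, Finset.mul_sum]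
    refine Finset.sum_congr rfl fun i _ => Finset.sum_congr rfl fun j _ => by ring
  rw [e3, ← e1] at e2
  convert e2.symm using 1
  · refine integral_congr_ae (ae_of_all _ fun ω => ?_)
    simp only [Function.comp_apply, PiLp.inner_apply, RCLike.inner_apply, conj_trivial, dotProduct]
    rw [mul_comm Complex.I]
  · refine integral_congr_ae (ae_of_all _ fun g => ?_)
    simp only [Function.comp_apply, PiLp.inner_apply, RCLike.inner_apply, conj_trivial]
    congr 3
    simp only [WithLp.ofLp_sum, WithLp.ofLp_smul, Finset.sum_apply, Pi.smul_apply, smul_eq_mul,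
      Finset.sum_mul, Finset.mul_sum]
    rw [Finset.sum_comm]
    refine Finset.sum_congr rfl fun i _ => Finset.sum_congr rfl fun j _ => by ring


lemma int_even (m : ℕ) (x : ℝ) : |x| ^ (2 * m : ℝ) = x ^ (2 * m) := by
  rw [show (2 * m : ℝ) = ((2 * m : ℕ) : ℝ) by push_cast; ring, Real.rpow_natCast,
    (even_two_mul m).pow_abs]

lemma single_mom (a : E4) (m : ℕ) :
    ∫ g, |∑ j, a j * g j| ^ (2 * m : ℝ) ∂gm = df m * (‖a‖ ^ 2) ^ m := by
  have hg : GF Lam Lg Dg := ⟨Lg_one, gf_dl, gf_st⟩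
  rw [← hg.mom, Lg_apply]
  simp only [int_even, map_pow, eval_Lam]

end GPI

theorem gpi_dim_four_neg_power_even_powers
    {Ω : Type*} [MeasurableSpace Ω] (μ : Measure Ω) [IsProbabilityMeasure μ]
    (X : Ω → (Fin 4 → ℝ)) (hXm : Measurable X)
    (S : Matrix (Fin 4) (Fin 4) ℝ) (hS : S.IsSymm)
    (hGauss : ∀ u : Fin 4 → ℝ,
      ∫ ω, Complex.exp (Complex.I * ((u ⬝ᵥ X ω : ℝ) : ℂ)) ∂μ =
        Complex.exp (-(((u ⬝ᵥ S *ᵥ u : ℝ) : ℂ)) / 2))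
    (hvar : ∀ i, 0 < S i i)
    {α₁ : ℝ} (hα₁ : α₁ ∈ Set.Ioo (0 : ℝ) 1)
    (m : Fin 3 → ℕ) (hm : ∀ i, 0 < m i) :
    (∏ i : Fin 3,
        (1 - (S 0 i.succ / (Real.sqrt (S 0 0) * Real.sqrt (S i.succ i.succ))) ^ 2) ^
          ((2 * m i : ℝ) / 2)) *
      (∫ ω, |X ω 0| ^ (-α₁) ∂μ) *
      ∏ i : Fin 3, ∫ ω, |X ω i.succ| ^ (2 * m i : ℝ) ∂μ ≤
      ∫ ω, |X ω 0| ^ (-α₁) * ∏ i : Fin 3, |X ω i.succ| ^ (2 * m i : ℝ) ∂μ := by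
  have hpsd := GPI.psd_of μ X S hGauss
  obtain ⟨a, ha, ha0⟩ := GPI.exists_vectors S hS hpsd (hvar 0)
  have hlaw := GPI.law μ X hXm S hGauss a ha
  have hT : Measurable (fun (g : Fin 4 → ℝ) (i : Fin 4) => ∑ j, a i j * g j) := by fun_prop
  have tr : ∀ f : (Fin 4 → ℝ) → ℝ, Measurable f →
      ∫ ω, f (X ω) ∂μ = ∫ g, f (fun i => ∑ j, a i j * g j) ∂GPI.gm := by
    intro f hf
    rw [← integral_map hXm.aemeasurable hf.aestronglyMeasurable, hlaw,
      integral_map hT.aemeasurable hf.aestronglyMeasurable]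
  have hσ : 0 < √(S 0 0) := Real.sqrt_pos.2 (hvar 0)
  have hx0 : ∀ g : Fin 4 → ℝ, ∑ j, a 0 j * g j = √(S 0 0) * g 0 := by
    intro g
    rw [ha0, Fin.sum_univ_four]
    simp
  have habs : ∀ g : Fin 4 → ℝ, |∑ j, a 0 j * g j| ^ (-α₁) = √(S 0 0) ^ (-α₁) * |g 0| ^ (-α₁) := by
    intro g
    rw [hx0, abs_mul, abs_of_pos hσ, Real.mul_rpow hσ.le (abs_nonneg _)]
  have t0 : ∫ ω, |X ω 0| ^ (-α₁) ∂μ = √(S 0 0) ^ (-α₁) * ∫ g, |g 0| ^ (-α₁) ∂GPI.gm := by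
    rw [tr (fun x => |x 0| ^ (-α₁)) (by fun_prop), ← integral_const_mul]
    simp only [habs]
  have ti : ∀ i : Fin 3, ∫ ω, |X ω i.succ| ^ (2 * m i : ℝ) ∂μ =
      GPI.df (m i) * (S i.succ i.succ) ^ m i := by
    intro i
    rw [tr (fun x => |x i.succ| ^ (2 * m i : ℝ)) (by fun_prop), GPI.single_mom,
      ← real_inner_self_eq_norm_sq, ha]
  let b : Fin 3 → GPI.E4 := fun i => a i.succ
  have tp : ∫ ω, |X ω 0| ^ (-α₁) * ∏ i : Fin 3, |X ω i.succ| ^ (2 * m i : ℝ) ∂μ =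
      √(S 0 0) ^ (-α₁) * ∫ g, |g 0| ^ (-α₁) * MvPolynomial.eval g (GPI.PP m b) ∂GPI.gm := by
    rw [tr (fun x => |x 0| ^ (-α₁) * ∏ i : Fin 3, |x i.succ| ^ (2 * m i : ℝ)) (by fun_prop),
      ← integral_const_mul]
    simp only [habs, GPI.int_even, GPI.eval_PP, b, mul_assoc]
  have hC : (∏ i : Fin 3,
        (1 - (S 0 i.succ / (Real.sqrt (S 0 0) * Real.sqrt (S i.succ i.succ))) ^ 2) ^
          ((2 * m i : ℝ) / 2)) * ∏ i : Fin 3, (GPI.df (m i) * (S i.succ i.succ) ^ m i) =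
      GPI.C0 m b := by
    rw [GPI.C0, ← Finset.prod_mul_distrib]
    refine Finset.prod_congr rfl fun i _ => ?_
    have e0 : b i 0 * √(S 0 0) = S 0 i.succ := by
      have := ha 0 i.succ
      rw [ha0, PiLp.inner_apply, Fin.sum_univ_four] at this
      simpa [b] using this
    have e1 : ‖b i‖ ^ 2 = S i.succ i.succ := by
      rw [← real_inner_self_eq_norm_sq, ha]
    have hi := hvar i.succ
    rw [mul_div_cancel_left₀ _ (two_ne_zero), Real.rpow_natCast, mul_left_comm, ← mul_pow, e1, ← e0]
    congr 2
    rw [mul_comm (b i 0), mul_div_mul_left _ _ hσ.ne', div_pow, Real.sq_sqrt hi.le]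
    field_simp
  have hmain := GPI.gm_ineq hα₁.1 hα₁.2 m hm b
  rw [t0, tp]
  simp_rw [ti]
  rw [mul_right_comm, hC, mul_left_comm]
  exact mul_le_mul_of_nonneg_left hmain (Real.rpow_nonneg hσ.le _)
end

section
/- Let (X₁,X₂,X₃) be a centered Gaussian random vector in ℝ³ with nondegenerate components and correlation coefficients ρ_{12}, ρ_{13}. Then for every α₁ ∈ (0,1) and α₂,α₃ ∈ (0,∞), E[|X₁|^{-α₁}|X₂|^{α₂}|X₃|^{α₃}] ≤ C_{α₂,α₃} · E[|X₁|^{-α₁}] E[|X₂|^{α₂}] E[|X₃|^{α₃}], where C_{α₂,α₃} = Γ(1/2)Γ(1/2 + (α₂+α₃)/2) / (Γ(1/2+α₂/2) Γ(1/2+α₃/2)). -/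
open MeasureTheory Matrix
open ProbabilityTheory
open scoped NNReal ENNReal

noncomputable def gmom (q : ℝ) : ℝ := 2 ^ (q/2) * Real.Gamma (1/2 + q/2) / Real.Gamma (1/2)

lemma gmom_pos {q : ℝ} (hq : -1 < q) : 0 < gmom q := by
  unfold gmom
  have h1 := Real.Gamma_pos_of_pos (s := 1/2 + q/2) (by linarith)
  have h2 := Real.Gamma_pos_of_pos (s := 1/2) (by norm_num)
  positivity

lemma integral_abs_rpow_std {q : ℝ} (hq : -1 < q) :
    ∫ x, |x| ^ q ∂(gaussianReal 0 1) = gmom q := by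
  rw [integral_gaussianReal_eq_integral_smul (by norm_num)]
  have h1 : ∀ x : ℝ, gaussianPDFReal 0 1 x • |x| ^ q
      = (fun y : ℝ => (√(2 * Real.pi))⁻¹ * (y ^ q * Real.exp (-(1/2) * y ^ (2:ℝ)))) |x| := by
    intro x
    simp only [gaussianPDFReal, smul_eq_mul]
    simp
    have : -x^2/2 = -(2⁻¹ * x^2) := by ring
    rw [this]; ring
  simp_rw [h1]
  rw [integral_comp_abs (f := fun y : ℝ => (√(2 * Real.pi))⁻¹ * (y ^ q * Real.exp (-(1/2) * y ^ (2:ℝ)))),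
    integral_const_mul, integral_rpow_mul_exp_neg_mul_rpow (by norm_num) hq (by norm_num), gmom,
    Real.Gamma_one_half_eq]
  have h3 : ((1:ℝ)/2) ^ (-(q+1)/2) = 2 ^ (q/2) * √2 := by
    rw [one_div, Real.inv_rpow (by norm_num), ← Real.rpow_neg (by norm_num), Real.sqrt_eq_rpow,
      ← Real.rpow_add (by norm_num)]
    congr 1; ring
  have h4 : √(2 * Real.pi) = √2 * √Real.pi := Real.sqrt_mul (by norm_num) _
  rw [h3, h4, show (q+1)/2 = 1/2 + q/2 by ring]
  have : 0 < √Real.pi := Real.sqrt_pos.2 Real.pi_pos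
  field_simp

lemma lintegral_abs_rpow_std {q : ℝ} (hq : -1 < q) :
    ∫⁻ x, ENNReal.ofReal (|x| ^ q) ∂(gaussianReal 0 1) = ENNReal.ofReal (gmom q) := by
  rw [← integral_abs_rpow_std hq, ofReal_integral_eq_lintegral_ofReal]
  · by_contra h
    have := integral_abs_rpow_std hq
    rw [integral_undef h] at this
    exact (gmom_pos hq).ne this
  · exact Filter.Eventually.of_forall fun x => by positivity

lemma lintegral_abs_rpow {q : ℝ} (hq : -1 < q) (v : ℝ≥0) :
    ∫⁻ x, ENNReal.ofReal (|x| ^ q) ∂(gaussianReal 0 v) = ENNReal.ofReal ((v:ℝ) ^ (q/2) * gmom q) := by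
  have h := gaussianReal_map_const_mul (μ := 0) (v := 1) (√(v:ℝ))
  have h2 : gaussianReal 0 v = (gaussianReal 0 1).map (√(v:ℝ) * ·) := by
    rw [h]; congr 1
    · simp
    · ext; simp
  rw [h2, lintegral_map (by fun_prop) (by fun_prop)]
  have : ∀ x : ℝ, ENNReal.ofReal (|√(v:ℝ) * x| ^ q) =
      ENNReal.ofReal ((v:ℝ)^(q/2)) * ENNReal.ofReal (|x| ^ q) := by
    intro x
    rw [← ENNReal.ofReal_mul (by positivity), abs_mul, Real.mul_rpow (abs_nonneg _) (abs_nonneg _),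
      abs_of_nonneg (Real.sqrt_nonneg _), Real.sqrt_eq_rpow, ← Real.rpow_mul (by positivity)]
    congr 3; ring
  simp_rw [this]
  rw [lintegral_const_mul _ (by fun_prop), lintegral_abs_rpow_std hq, ← ENNReal.ofReal_mul (by positivity)]

lemma lintegral_tilt {a : ℝ≥0} (ha : a ≠ 0) (t : ℝ≥0) {f : ℝ → ℝ≥0∞} (hf : Measurable f) :
    ∫⁻ u, ENNReal.ofReal (Real.exp (-(t * u^2/2))) * f u ∂(gaussianReal 0 a) =
      ENNReal.ofReal (√(1 + t*a))⁻¹ * ∫⁻ u, f u ∂(gaussianReal 0 (a/(1+t*a))) := by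
  have ha' : a/(1+t*a) ≠ 0 := by positivity
  rw [gaussianReal_of_var_ne_zero _ ha, gaussianReal_of_var_ne_zero _ ha',
    lintegral_withDensity_eq_lintegral_mul _ (by fun_prop) (by fun_prop),
    lintegral_withDensity_eq_lintegral_mul _ (by fun_prop) (by fun_prop),
    ← lintegral_const_mul _ (by fun_prop)]
  congr 1 with u
  simp only [Pi.mul_apply, gaussianPDF, ← mul_assoc]
  rw [← ENNReal.ofReal_mul (gaussianPDFReal_nonneg _ _ _), ← ENNReal.ofReal_mul (by positivity)]
  congr 2
  simp only [gaussianPDFReal]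
  have hapos : (0:ℝ) < a := by exact_mod_cast pos_iff_ne_zero.2 ha
  have htpos : (0:ℝ) < 1 + t * a := by positivity
  push_cast
  rw [mul_assoc, ← Real.exp_add, ← mul_assoc, ← mul_inv, ← Real.sqrt_mul htpos.le]
  have e1 : (1 + (t:ℝ) * a) * (2 * Real.pi * (a / (1 + t * a))) = 2 * Real.pi * a := by
    field_simp
  rw [e1]
  congr 2
  field_simp; ring

lemma lintegral_lin (b p : ℝ) (hp : 0 < p) (a c : ℝ≥0) :
    ∫⁻ u, ∫⁻ y, ENNReal.ofReal (|b*u+y| ^ p) ∂(gaussianReal 0 c) ∂(gaussianReal 0 a) =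
      ENNReal.ofReal ((b^2*a+c) ^ (p/2) * gmom p) := by
  have h := gaussianReal_conv_gaussianReal (m₁ := 0) (m₂ := 0) (v₁ := NNReal.mk (b^2) (sq_nonneg b) * a) (v₂ := c)
  have h1 := gaussianReal_map_const_mul (μ := 0) (v := a) b
  rw [mul_zero] at h1
  have h2 := lintegral_abs_rpow (q := p) (by linarith) (NNReal.mk (b^2) (sq_nonneg b) * a + c)
  rw [add_zero] at h
  rw [← h, Measure.lintegral_conv (by fun_prop)] at h2
  rw [← h1] at h2
  rw [lintegral_map (by fun_prop) (by fun_prop)] at h2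
  have e : (((NNReal.mk (b^2) (sq_nonneg b) * a + c : ℝ≥0)) : ℝ) = b^2*a+c := by
    rw [NNReal.coe_add, NNReal.coe_mul]; rfl
  rw [e] at h2
  exact h2

lemma tilt_le (b p : ℝ) (hp : 0 < p) (a c t : ℝ≥0) (ha : a ≠ 0) :
    ∫⁻ u, ENNReal.ofReal (Real.exp (-(t * u^2/2))) *
        ∫⁻ y, ENNReal.ofReal (|b*u+y| ^ p) ∂(gaussianReal 0 c) ∂(gaussianReal 0 a) ≤
      (∫⁻ u, ENNReal.ofReal (Real.exp (-(t * u^2/2))) ∂(gaussianReal 0 a)) *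
        ENNReal.ofReal ((b^2*a+c) ^ (p/2) * gmom p) := by
  have h1 := lintegral_tilt ha t (f := 1) (by fun_prop)
  simp only [Pi.one_apply, mul_one, lintegral_const, measure_univ] at h1
  rw [h1, lintegral_tilt ha t (by fun_prop), lintegral_lin b p hp]
  have := (gmom_pos (q := p) (by linarith)).le
  gcongr
  exact div_le_self (by positivity) (by simp)

lemma mixture {α : ℝ} (hα : 0 < α) {u : ℝ} (hu : u ≠ 0) :
    ∫⁻ t in Set.Ioi (0:ℝ), ENNReal.ofReal (t ^ (α/2 - 1)) *
      ENNReal.ofReal (Real.exp (-(t.toNNReal * u^2/2)))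
      = ENNReal.ofReal (2 ^ (α/2) * Real.Gamma (α/2)) * ENNReal.ofReal (|u| ^ (-α)) := by
  have hr : 0 < u^2/2 := by positivity
  have h := Real.integral_rpow_mul_exp_neg_mul_Ioi (a := α/2) (by linarith) hr
  have hG := Real.Gamma_pos_of_pos (s := α/2) (by linarith)
  have e : (1 / (u^2/2)) ^ (α/2) = 2^(α/2) * |u|^(-α) := by
    rw [one_div_div, Real.div_rpow (by norm_num) (by positivity), ← sq_abs, ← Real.rpow_natCast,
      ← Real.rpow_mul (by positivity), Real.rpow_neg (by positivity), div_eq_mul_inv]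
    congr 3; push_cast; ring
  rw [e] at h
  rw [← ENNReal.ofReal_mul (by positivity), show 2 ^ (α/2) * Real.Gamma (α/2) * |u|^(-α) =
    2 ^ (α/2) * |u|^(-α) * Real.Gamma (α/2) by ring, ← h, ofReal_integral_eq_lintegral_ofReal]
  · refine setLIntegral_congr_fun measurableSet_Ioi fun t ht => ?_
    have ht' : 0 < t := ht
    rw [← ENNReal.ofReal_mul (by positivity), Real.coe_toNNReal _ ht'.le]
    congr 4; ring
  · by_contra h'
    rw [integral_undef h'] at h
    have : 0 < 2^(α/2) * |u|^(-α) * Real.Gamma (α/2) := by positivity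
    exact this.ne h
  · refine (ae_restrict_iff' measurableSet_Ioi).2 (Filter.Eventually.of_forall fun t ht => ?_)
    have ht' : 0 < t := ht
    simp only [Pi.zero_apply]; positivity

lemma two_dim (b p α : ℝ) (hp : 0 < p) (hα : 0 < α) (a c : ℝ≥0) (ha : a ≠ 0) :
    ∫⁻ u, ENNReal.ofReal (|u| ^ (-α)) *
        ∫⁻ y, ENNReal.ofReal (|b*u+y| ^ p) ∂(gaussianReal 0 c) ∂(gaussianReal 0 a) ≤
      (∫⁻ u, ENNReal.ofReal (|u| ^ (-α)) ∂(gaussianReal 0 a)) *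
        ENNReal.ofReal ((b^2*a+c) ^ (p/2) * gmom p) := by
  set K := ENNReal.ofReal (2 ^ (α/2) * Real.Gamma (α/2)) with hK
  have hK0 : K ≠ 0 := by
    have hG := Real.Gamma_pos_of_pos (s := α/2) (by linarith)
    rw [hK, Ne, ENNReal.ofReal_eq_zero, not_le]; positivity
  have hKt : K ≠ ⊤ := ENNReal.ofReal_ne_top
  have hne : ∀ᵐ u ∂(gaussianReal 0 a), u ≠ 0 :=
    gaussianReal_absolutelyContinuous 0 ha (by simp [ae_iff] : ∀ᵐ u : ℝ, u ≠ 0)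
  have key : ∀ f : ℝ → ℝ≥0∞, Measurable f →
      K * ∫⁻ u, ENNReal.ofReal (|u| ^ (-α)) * f u ∂(gaussianReal 0 a) =
      ∫⁻ t in Set.Ioi (0:ℝ), ENNReal.ofReal (t ^ (α/2 - 1)) *
        ∫⁻ u, ENNReal.ofReal (Real.exp (-(t.toNNReal * u^2/2))) * f u ∂(gaussianReal 0 a) := by
    intro f hf
    rw [← lintegral_const_mul _ (by fun_prop)]
    have : ∀ t : ℝ, ENNReal.ofReal (t ^ (α/2 - 1)) *
        ∫⁻ u, ENNReal.ofReal (Real.exp (-(t.toNNReal * u^2/2))) * f u ∂(gaussianReal 0 a)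
        = ∫⁻ u, ENNReal.ofReal (t ^ (α/2 - 1)) *
          (ENNReal.ofReal (Real.exp (-(t.toNNReal * u^2/2))) * f u) ∂(gaussianReal 0 a) := by
      intro t
      rw [lintegral_const_mul _ (by fun_prop)]
    simp_rw [this]
    rw [lintegral_lintegral_swap (by fun_prop)]
    refine lintegral_congr_ae ?_
    filter_upwards [hne] with u hu
    rw [← mul_assoc, ← mixture hα hu, ← lintegral_mul_const _ (by fun_prop)]
    simp_rw [mul_assoc]
  rw [← ENNReal.mul_le_mul_iff_right hK0 hKt, key _ (by fun_prop), ← mul_assoc]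
  have k1 := key 1 (by fun_prop)
  simp only [Pi.one_apply, mul_one] at k1
  rw [k1, ← lintegral_mul_const'' _ ?_]
  · refine lintegral_mono fun t => ?_
    rw [mul_assoc]
    gcongr
    exact tilt_le b p hp a c _ ha
  · refine Measurable.aemeasurable ?_
    refine Measurable.mul (by fun_prop) ?_
    exact Measurable.lintegral_prod_right' (f := fun x : ℝ × ℝ => ENNReal.ofReal (Real.exp (-(x.1.toNNReal * x.2^2/2)))) (by fun_prop)

lemma pair_le {Ω : Type*} [MeasurableSpace Ω] (μ : Measure Ω) [IsProbabilityMeasure μ]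
    (U V : Ω → ℝ) (hU : Measurable U) (hV : Measurable V) (A B D : ℝ) (hA : 0 < A)
    (H : ∀ s r : ℝ, ∫ ω, Complex.exp (((s * U ω + r * V ω : ℝ) : ℂ) * Complex.I) ∂μ =
      Complex.exp (((-(s^2*A + 2*s*r*B + r^2*D)/2 : ℝ) : ℂ)))
    {p α : ℝ} (hp : 0 < p) (hα : 0 < α) :
    ∫⁻ ω, ENNReal.ofReal (|U ω| ^ (-α)) * ENNReal.ofReal (|V ω| ^ p) ∂μ ≤
      (∫⁻ ω, ENNReal.ofReal (|U ω| ^ (-α)) ∂μ) * ENNReal.ofReal (D ^ (p/2) * gmom p) := by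
  set b := B / A with hb
  have hc : 0 ≤ D - b * B := by
    have h1 := norm_integral_le_of_norm_le_const (μ := μ)
      (f := fun ω => Complex.exp (((-b * U ω + 1 * V ω : ℝ) : ℂ) * Complex.I)) (C := 1)
      (Filter.Eventually.of_forall fun ω => by rw [Complex.norm_exp_ofReal_mul_I])
    rw [H, Complex.norm_exp, Complex.ofReal_re] at h1
    simp only [probReal_univ, mul_one, Real.exp_le_one_iff] at h1
    have : (-b)^2*A = b * B := by rw [hb]; field_simp
    rw [this] at h1
    linarith
  have hmap : μ.map (fun ω => (U ω, V ω - b * U ω)) =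
      (gaussianReal 0 (NNReal.mk A hA.le)).prod (gaussianReal 0 (NNReal.mk (D - b * B) hc)) := by
    have : IsProbabilityMeasure (μ.map (fun ω => (U ω, V ω - b * U ω))) :=
      Measure.isProbabilityMeasure_map (by fun_prop)
    rw [← charFun_eq_prod_iff]
    intro t
    rw [Measure.map_map (by fun_prop) (by fun_prop), charFun_apply, integral_map (by fun_prop) (by fun_prop),
      charFun_gaussianReal, charFun_gaussianReal, ← Complex.exp_add]
    have := H (t.ofLp.1 - b * t.ofLp.2) t.ofLp.2
    convert this using 2
    · ext ω
      congr 3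
      simp [WithLp.prod_inner_apply]
      ring
    · simp only [NNReal.coe_mk]
      rw [hb]
      push_cast
      have : (A:ℂ) ≠ 0 := by exact_mod_cast hA.ne'
      field_simp
      ring
  have hU' : μ.map U = gaussianReal 0 (NNReal.mk A hA.le) := by
    have := congrArg Measure.fst hmap
    rw [Measure.fst_prod, Measure.fst_map_prodMk (by fun_prop)] at this
    exact this
  have hA' : (NNReal.mk A hA.le) ≠ 0 := by
    intro h; exact hA.ne' (congrArg NNReal.toReal h)
  have := two_dim b p α hp hα (NNReal.mk A hA.le) (NNReal.mk (D - b * B) hc) hA'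
  have e : b^2 * ((NNReal.mk A hA.le) : ℝ) + ((NNReal.mk (D - b * B) hc) : ℝ) = D := by
    simp only [NNReal.coe_mk]; rw [hb]; field_simp; ring
  have e3 : ∫⁻ u, ENNReal.ofReal (|u| ^ (-α)) ∂(gaussianReal 0 (NNReal.mk A hA.le)) =
      ∫⁻ ω, ENNReal.ofReal (|U ω| ^ (-α)) ∂μ := by
    rw [← hU', lintegral_map (by fun_prop) (by fun_prop)]
  rw [e, e3] at this
  refine le_trans (le_of_eq ?_) this
  have e2 : ∀ u : ℝ, ENNReal.ofReal (|u| ^ (-α)) *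
        ∫⁻ y, ENNReal.ofReal (|b*u+y| ^ p) ∂(gaussianReal 0 (NNReal.mk (D - b * B) hc)) =
      ∫⁻ y, ENNReal.ofReal (|u| ^ (-α)) * ENNReal.ofReal (|b*u+y| ^ p) ∂(gaussianReal 0 (NNReal.mk (D - b * B) hc)) := by
    intro u; rw [lintegral_const_mul _ (by fun_prop)]
  simp_rw [e2]
  rw [lintegral_lintegral (by fun_prop), ← hmap, lintegral_map (by fun_prop) (by fun_prop)]
  simp

lemma marginal {Ω : Type*} [MeasurableSpace Ω] (μ : Measure Ω) [IsProbabilityMeasure μ]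
    (U : Ω → ℝ) (hU : Measurable U) (A : ℝ) (hA : 0 < A)
    (H : ∀ s : ℝ, ∫ ω, Complex.exp (((s * U ω : ℝ) : ℂ) * Complex.I) ∂μ =
      Complex.exp (((-(s^2*A)/2 : ℝ) : ℂ))) {q : ℝ} (hq : -1 < q) :
    ∫⁻ ω, ENNReal.ofReal (|U ω| ^ q) ∂μ = ENNReal.ofReal (A ^ (q/2) * gmom q) := by
  have : μ.map U = gaussianReal 0 (NNReal.mk A hA.le) := by
    have : IsProbabilityMeasure (μ.map U) := Measure.isProbabilityMeasure_map (by fun_prop)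
    refine Measure.ext_of_charFun ?_
    ext t
    rw [charFun_gaussianReal, charFun_apply_real, integral_map (by fun_prop) (by fun_prop)]
    convert H t using 2
    · simp
    · simp only [NNReal.coe_mk]; push_cast; ring
  have h2 := lintegral_abs_rpow hq (NNReal.mk A hA.le)
  rw [← this, lintegral_map (by fun_prop) (by fun_prop)] at h2
  exact h2

theorem gpi_dim_three_upper_bound
    {Ω : Type*} [MeasurableSpace Ω] (μ : Measure Ω) [IsProbabilityMeasure μ]
    (X : Ω → (Fin 3 → ℝ)) (hXm : Measurable X)
    (S : Matrix (Fin 3) (Fin 3) ℝ) (hS : S.IsSymm)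
    (hGauss : ∀ u : Fin 3 → ℝ,
      ∫ ω, Complex.exp (Complex.I * ((u ⬝ᵥ X ω : ℝ) : ℂ)) ∂μ =
        Complex.exp (-(((u ⬝ᵥ S *ᵥ u : ℝ) : ℂ)) / 2))
    (hvar : ∀ i, 0 < S i i)
    {α₁ α₂ α₃ : ℝ} (hα₁ : α₁ ∈ Set.Ioo (0 : ℝ) 1) (hα₂ : 0 < α₂) (hα₃ : 0 < α₃) :
    ∫ ω, |X ω 0| ^ (-α₁) * |X ω 1| ^ α₂ * |X ω 2| ^ α₃ ∂μ ≤
      (Real.Gamma (1 / 2) * Real.Gamma (1 / 2 + (α₂ + α₃) / 2) /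
          (Real.Gamma (1 / 2 + α₂ / 2) * Real.Gamma (1 / 2 + α₃ / 2))) *
        ((∫ ω, |X ω 0| ^ (-α₁) ∂μ) * (∫ ω, |X ω 1| ^ α₂ ∂μ) *
          ∫ ω, |X ω 2| ^ α₃ ∂μ) := by
  obtain ⟨h1, h1'⟩ := hα₁
  have hX : ∀ i, Measurable fun ω => X ω i := fun i => by fun_prop
  have H : ∀ i (s r : ℝ), ∫ ω, Complex.exp (((s * X ω 0 + r * X ω i : ℝ) : ℂ) * Complex.I) ∂μ =
      Complex.exp (((-(s^2*S 0 0 + 2*s*r*S 0 i + r^2*S i i)/2 : ℝ) : ℂ)) := by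
    intro i s r
    have h := hGauss (Pi.single 0 s + Pi.single i r)
    have hsym : S i 0 = S 0 i := hS.apply 0 i
    simp only [add_dotProduct, single_dotProduct, mulVec_add, Pi.add_apply, mulVec_single,
      Pi.smul_apply, MulOpposite.smul_eq_mul_unop, MulOpposite.unop_op, Matrix.col_apply, hsym] at h
    simp_rw [mul_comm Complex.I] at h
    rw [h]
    congr 1
    push_cast
    ring
  have hM : ∀ i {q : ℝ}, -1 < q → ∫⁻ ω, ENNReal.ofReal (|X ω i| ^ q) ∂μ =
      ENNReal.ofReal (S i i ^ (q/2) * gmom q) := by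
    intro i q hq
    refine marginal μ _ (hX i) _ (hvar i) (fun s => ?_) hq
    have := H i 0 s
    simpa using this
  have hMr : ∀ i {q : ℝ}, -1 < q → ∫ ω, |X ω i| ^ q ∂μ = S i i ^ (q/2) * gmom q := by
    intro i q hq
    have := gmom_pos hq
    have := (hvar i).le
    rw [integral_eq_lintegral_of_nonneg_ae (Filter.Eventually.of_forall fun ω => by positivity)
      (Measurable.aestronglyMeasurable (by fun_prop)), hM i hq, ENNReal.toReal_ofReal (by positivity)]
  set s := α₂ + α₃ with hs
  have hspos : 0 < s := by positivity
  have P : ∀ i, ∫⁻ ω, ENNReal.ofReal (|X ω 0| ^ (-α₁)) * ENNReal.ofReal (|X ω i| ^ s) ∂μ ≤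
      ENNReal.ofReal ((S 0 0 ^ (-α₁/2) * gmom (-α₁)) * (S i i ^ (s/2) * gmom s)) := by
    intro i
    have := pair_le μ _ _ (hX 0) (hX i) _ _ _ (hvar 0) (H i) hspos h1
    have g := gmom_pos (q := -α₁) (by linarith)
    have := (hvar 0).le
    rw [ENNReal.ofReal_mul (by positivity), ← hM 0 (by linarith)]
    assumption
  set W := S 0 0 ^ (-α₁/2) * gmom (-α₁) with hW
  have hWpos : 0 < W := mul_pos (Real.rpow_pos_of_pos (hvar 0) _) (gmom_pos (by linarith))
  have hg := gmom_pos (q := s) (by linarith)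
  have key : ∫⁻ ω, ENNReal.ofReal (|X ω 0| ^ (-α₁) * |X ω 1| ^ α₂ * |X ω 2| ^ α₃) ∂μ ≤
      ENNReal.ofReal (W * gmom s * (S 1 1 ^ (α₂/2) * S 2 2 ^ (α₃/2))) := by
    have hold := ENNReal.lintegral_mul_norm_pow_le (μ := μ)
      (f := fun ω => ENNReal.ofReal (|X ω 0| ^ (-α₁)) * ENNReal.ofReal (|X ω 1| ^ s))
      (g := fun ω => ENNReal.ofReal (|X ω 0| ^ (-α₁)) * ENNReal.ofReal (|X ω 2| ^ s))
      (by fun_prop) (by fun_prop) (p := α₂/s) (q := α₃/s) (by positivity) (by positivity)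
      (by field_simp; linarith)
    have e : ∀ ω, ENNReal.ofReal (|X ω 0| ^ (-α₁) * |X ω 1| ^ α₂ * |X ω 2| ^ α₃) =
      (ENNReal.ofReal (|X ω 0| ^ (-α₁)) * ENNReal.ofReal (|X ω 1| ^ s)) ^ (α₂/s) *
      (ENNReal.ofReal (|X ω 0| ^ (-α₁)) * ENNReal.ofReal (|X ω 2| ^ s)) ^ (α₃/s) := by
      intro ω
      rw [← ENNReal.ofReal_mul (by positivity), ← ENNReal.ofReal_mul (by positivity),
        ENNReal.ofReal_rpow_of_nonneg (by positivity) (by positivity),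
        ENNReal.ofReal_rpow_of_nonneg (by positivity) (by positivity),
        ← ENNReal.ofReal_mul (by positivity)]
      congr 1
      rw [Real.mul_rpow (by positivity) (by positivity), Real.mul_rpow (by positivity) (by positivity),
        ← Real.rpow_mul (abs_nonneg (X ω 1)), ← Real.rpow_mul (abs_nonneg (X ω 2)),
        mul_div_cancel₀ _ hspos.ne', mul_div_cancel₀ _ hspos.ne']
      have : (|X ω 0| ^ (-α₁)) ^ (α₂/s) * (|X ω 0| ^ (-α₁)) ^ (α₃/s) = |X ω 0| ^ (-α₁) := by
        rw [← Real.rpow_add_of_nonneg (by positivity) (by positivity) (by positivity), ← add_div,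
          ← hs, div_self hspos.ne', Real.rpow_one]
      nth_rw 1 [← this]; ring
    simp_rw [e]
    refine hold.trans ?_
    refine (mul_le_mul' (ENNReal.rpow_le_rpow (P 1) (by positivity))
      (ENNReal.rpow_le_rpow (P 2) (by positivity))).trans (le_of_eq ?_)
    have v1 := hvar 1
    have v2 := hvar 2
    rw [ENNReal.ofReal_rpow_of_nonneg (by positivity) (by positivity),
        ENNReal.ofReal_rpow_of_nonneg (by positivity) (by positivity),
        ← ENNReal.ofReal_mul (by positivity)]
    congr 1
    rw [show W * (S 1 1 ^ (s/2) * gmom s) = (W * gmom s) * S 1 1 ^ (s/2) by ring,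
      show W * (S 2 2 ^ (s/2) * gmom s) = (W * gmom s) * S 2 2 ^ (s/2) by ring,
      Real.mul_rpow (x := W * gmom s) (y := S 1 1 ^ (s/2)) (by positivity) (by positivity),
      Real.mul_rpow (x := W * gmom s) (y := S 2 2 ^ (s/2)) (by positivity) (by positivity),
      ← Real.rpow_mul v1.le, ← Real.rpow_mul v2.le,
      show s/2*(α₂/s) = α₂/2 by field_simp, show s/2*(α₃/s) = α₃/2 by field_simp]
    have : (W * gmom s) ^ (α₂/s) * (W * gmom s) ^ (α₃/s) = W * gmom s := by
      rw [← Real.rpow_add (by positivity), ← add_div, ← hs, div_self hspos.ne', Real.rpow_one]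
    nth_rw 3 [← this]; ring
  have v1 := hvar 1
  have v2 := hvar 2
  rw [integral_eq_lintegral_of_nonneg_ae (Filter.Eventually.of_forall fun ω => by positivity)
      (Measurable.aestronglyMeasurable (by fun_prop)), hMr 0 (by linarith), hMr 1 (by linarith), hMr 2 (by linarith), ← hW]
  refine (ENNReal.toReal_mono ENNReal.ofReal_ne_top key).trans (le_of_eq ?_)
  rw [ENNReal.toReal_ofReal (by positivity)]
  have e2 : (2:ℝ) ^ (s/2) = 2 ^ (α₂/2) * 2 ^ (α₃/2) := by
    rw [← Real.rpow_add (by norm_num)]; congr 1; rw [hs]; ring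
  have g1 := Real.Gamma_pos_of_pos (s := 1/2) (by norm_num)
  have g2 := Real.Gamma_pos_of_pos (s := 1/2 + α₂/2) (by positivity)
  have g3 := Real.Gamma_pos_of_pos (s := 1/2 + α₃/2) (by positivity)
  unfold gmom
  rw [e2]
  generalize Real.Gamma (1/2) = G1 at *
  generalize Real.Gamma (1/2 + α₂/2) = G2 at *
  generalize Real.Gamma (1/2 + α₃/2) = G3 at *
  field_simp
end
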